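/- arXiv:1108.4564 — 6 statements merged into one kernel-verified Lean document; each statement's English description precedes it below -/
import Mathlib

section
/- Let R be a commutative Noetherian ring, I an ideal of R, and E an injective R-module. Then the I-torsion submodule Γ_I(E) = {x ∈ E | I^n x = 0 for some natural number n} is also an injective R-module. -/
/-- The `I`-torsion submodule `Γ_I(M) = {x ∈ M | I^n • x = 0 for some n ∈ ℕ}`. -/
def torsionGamma {R : Type*} [CommRing R] (I : Ideal R)
    (M : Type*) [AddCommGroup M] [Module R M] : Submodule R M where
  carrier := {x | ∃ n : ℕ, ∀ r ∈ I ^ n, r • x = 0}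
  zero_mem' := ⟨0, fun r _ => smul_zero r⟩
  add_mem' := by
    rintro a b ⟨n, hn⟩ ⟨m, hm⟩
    refine ⟨n + m, fun r hr => ?_⟩
    rw [smul_add, hn r (Ideal.pow_le_pow_right (Nat.le_add_right n m) hr),
      hm r (Ideal.pow_le_pow_right (Nat.le_add_left m n) hr), add_zero]
  smul_mem' := by
    rintro c x ⟨n, hn⟩
    exact ⟨n, fun r hr => by rw [smul_comm, hn r hr, smul_zero]⟩

/-!
Artin–Rees lets a map from a submodule `N` of a finitely generated module `M` into `Γ_I(E)` factor
through the image of `N` in `M / I ^ m M` for some `m`. Injectivity of `E` extends it to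
`M / I ^ m M`, and since `I ^ m` kills this module, the extension still takes values in `Γ_I(E)`;
for ideals `N` of `M = R` this is Baer's criterion for `Γ_I(E)`.

`Module.Injective R E` only tests modules in the universe of `E`, so it implies Baer's criterion
for `E` only when `R` is small relative to that universe. A single extension problem along `X ↪ Y`
is unchanged when `R` is replaced by its quotient by the annihilator of `Y × E`, and that quotient
is always small.
-/

open Function LinearMap

universe u v

section Torsion

variable {R : Type*} [CommRing R] {I : Ideal R} {M : Type*} [AddCommGroup M] [Module R M]

lemma exists_pow_smul_eq_bot_of_le_torsionGamma {N : Submodule R M} (hN : N.FG)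
    (hle : N ≤ torsionGamma I M) : ∃ n : ℕ, I ^ n • N = ⊥ := by
  obtain ⟨s, rfl⟩ := hN
  choose! k hk using fun x (hx : x ∈ s) => hle (Submodule.subset_span hx)
  refine ⟨s.sup k, Submodule.le_annihilator_iff.1 fun r hr => ?_⟩
  rw [Submodule.mem_annihilator_span]
  rintro ⟨x, hx⟩
  exact hk x hx r (Ideal.pow_le_pow_right (Finset.le_sup hx) hr)

lemma range_le_torsionGamma {N : Type*} [AddCommGroup N] [Module R N] {n : ℕ} (f : N →ₗ[R] M)
    (hN : I ^ n ≤ Module.annihilator R N) : range f ≤ torsionGamma I M := by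
  rintro _ ⟨x, rfl⟩
  exact ⟨n, fun r hr => by rw [← map_smul, Module.mem_annihilator.1 (hN hr), map_zero]⟩

lemma exists_comap_subtype_pow_smul_top_le [IsNoetherianRing R] [Module.Finite R M] (I : Ideal R)
    (N : Submodule R M) (n : ℕ) :
    ∃ m : ℕ, (I ^ m • ⊤ : Submodule R M).comap N.subtype ≤ I ^ n • ⊤ := by
  obtain ⟨k, hk⟩ := I.exists_pow_inf_eq_pow_smul N
  refine ⟨n + k, ?_⟩
  rw [← Submodule.map_le_map_iff_of_injective N.injective_subtype, Submodule.map_comap_subtype,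
    Submodule.map_smul'', Submodule.map_subtype_top, inf_comm, hk _ (Nat.le_add_left k n),
    Nat.add_sub_cancel]
  exact Submodule.smul_mono le_rfl inf_le_right

end Torsion

section Baer

lemma exists_comp_eq_of_baer_of_ker_le_ker {R : Type*} [Ring R] {E M N : Type*} [AddCommGroup E]
    [Module R E] [AddCommGroup M] [Module R M] [AddCommGroup N] [Module R N]
    (hE : Module.Baer R E) (i : N →ₗ[R] M) (f : N →ₗ[R] E) (h : ker i ≤ ker f) :
    ∃ g : M →ₗ[R] E, g ∘ₗ i = f := by
  have hinj : Injective ((ker i).liftQ i le_rfl) :=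
    ker_eq_bot.1 (Submodule.ker_liftQ_eq_bot _ _ _ le_rfl)
  obtain ⟨g, hg⟩ := hE.extension_property _ hinj ((ker i).liftQ f h)
  refine ⟨g, ?_⟩
  rw [← Submodule.liftQ_mkQ (ker i) i le_rfl, ← LinearMap.comp_assoc, hg, Submodule.liftQ_mkQ]

variable {R : Type*} [CommRing R] [IsNoetherianRing R] {I : Ideal R}
  {E : Type*} [AddCommGroup E] [Module R E]

lemma exists_extension_range_le_torsionGamma (hE : Module.Baer R E) {M : Type*} [AddCommGroup M]
    [Module R M] [Module.Finite R M] (N : Submodule R M) (f : N →ₗ[R] E)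
    (hf : range f ≤ torsionGamma I E) :
    ∃ g : M →ₗ[R] E, range g ≤ torsionGamma I E ∧ g ∘ₗ N.subtype = f := by
  obtain ⟨n, hn⟩ := exists_pow_smul_eq_bot_of_le_torsionGamma
    (Module.Finite.iff_fg.1 (Module.Finite.range f)) hf
  have hker : I ^ n • ⊤ ≤ ker f := by
    rwa [le_ker_iff_map, Submodule.map_smul'', Submodule.map_top]
  obtain ⟨m, hm⟩ := exists_comap_subtype_pow_smul_top_le I N n
  let K : Submodule R M := I ^ m • ⊤
  obtain ⟨g, hg⟩ := exists_comp_eq_of_baer_of_ker_le_ker hE (K.mkQ ∘ₗ N.subtype) f <| by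
    rw [ker_comp, Submodule.ker_mkQ]
    exact hm.trans hker
  have hK : I ^ m ≤ Module.annihilator R (M ⧸ K) :=
    (Module.isTorsionBySet_iff_subset_annihilator R _).1
      (Module.isTorsionBySet_quotient_ideal_smul M (I ^ m))
  exact ⟨g ∘ₗ K.mkQ, (range_comp_le_range _ _).trans (range_le_torsionGamma g hK), hg⟩

lemma torsionGamma_baer (I : Ideal R) (hE : Module.Baer R E) :
    Module.Baer R (torsionGamma I E) := by
  intro J f
  obtain ⟨g, hg, hgf⟩ := exists_extension_range_le_torsionGamma hE J
    ((torsionGamma I E).subtype ∘ₗ f) (by rintro _ ⟨x, rfl⟩; exact (f x).2)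
  exact ⟨g.codRestrict _ fun r => hg ⟨r, rfl⟩, fun x hx =>
    Subtype.ext (LinearMap.congr_fun hgf ⟨x, hx⟩)⟩

end Baer

section Scalars

variable {R S : Type*} [CommRing R] [CommRing S] [Algebra R S]
  (hS : Surjective (algebraMap R S)) (E : Type*) [AddCommGroup E] [Module R E] [Module S E]
  [IsScalarTower R S E]

include hS

lemma injective_of_surjective_algebraMap [Module.Injective R E] : Module.Injective S E where
  out X Y _ _ _ _ i hi f := by
    let : Module R X := Module.compHom X (algebraMap R S)
    let : Module R Y := Module.compHom Y (algebraMap R S)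
    have : IsScalarTower R S X := .of_algebraMap_smul fun _ _ => rfl
    have : IsScalarTower R S Y := .of_algebraMap_smul fun _ _ => rfl
    obtain ⟨g, hg⟩ := Module.Injective.out (i.restrictScalars R) hi (f.restrictScalars R)
    exact ⟨g.extendScalarsOfSurjective hS, hg⟩

lemma restrictScalars_torsionGamma_map (I : Ideal R) :
    (torsionGamma (I.map (algebraMap R S)) E).restrictScalars R = torsionGamma I E := by
  ext x
  refine exists_congr fun n => ?_
  rw [← Ideal.map_pow]
  refine ⟨fun h r hr => ?_, fun h s hs => ?_⟩
  · rw [← algebraMap_smul S r x]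
    exact h _ (Ideal.mem_map_of_mem _ hr)
  · obtain ⟨r, hr, rfl⟩ := (Ideal.mem_map_iff_of_surjective _ hS).1 hs
    rw [algebraMap_smul]
    exact h r hr

end Scalars

lemma small_quotient_annihilator (R : Type*) [Ring R] (M : Type v) [AddCommGroup M]
    [Module R M] : Small.{v} (R ⧸ Module.annihilator R M) :=
  small_of_injective <|
    DFunLike.coe_injective.comp (RingHom.kerLift_injective (Module.toAddMonoidEnd R M))

lemma injective_of_forall_small_surjective_algebraMap {R : Type u} [CommRing R] {E : Type v}
    [AddCommGroup E] [Module R E] (N : Submodule R E)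
    (h : ∀ (S : Type u) [CommRing S] [Small.{v} S] [Algebra R S] [Module S E]
      [IsScalarTower R S E], Surjective (algebraMap R S) →
      ∃ N' : Submodule S E, N'.restrictScalars R = N ∧ Module.Injective S N') :
    Module.Injective R N where
  out X Y _ _ _ _ i hi f := by
    let A := Module.annihilator R (Y × E)
    have hYE : Module.IsTorsionBySet R (Y × E) A := Module.isTorsionBySet_annihilator R (Y × E)
    have hY : Module.IsTorsionBySet R Y A := fun y a => congrArg Prod.fst (@hYE (y, 0) a)
    have hE : Module.IsTorsionBySet R E A := fun e a => congrArg Prod.snd (@hYE (0, e) a)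
    have hX : Module.IsTorsionBySet R X A := fun x a =>
      hi (by rw [map_smul, map_zero, hY])
    let : Module (R ⧸ A) X := hX.module
    let : Module (R ⧸ A) Y := hY.module
    let : Module (R ⧸ A) E := hE.module
    have : IsScalarTower R (R ⧸ A) X := hX.isScalarTower
    have : IsScalarTower R (R ⧸ A) Y := hY.isScalarTower
    have : IsScalarTower R (R ⧸ A) E := hE.isScalarTower
    have : Small.{v} (R ⧸ A) := small_quotient_annihilator R (Y × E)
    have hS : Surjective (algebraMap R (R ⧸ A)) := Ideal.Quotient.mk_surjective
    obtain ⟨N', rfl, hN'⟩ := h (R ⧸ A) hS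
    let f' : X →ₗ[R] N' := f
    obtain ⟨g, hg⟩ := hN'.out (i.extendScalarsOfSurjective hS) hi (f'.extendScalarsOfSurjective hS)
    exact ⟨g.restrictScalars R, hg⟩

/-- If `R` is a commutative Noetherian ring, `I` an ideal of `R` and `E` an injective
`R`-module, then the `I`-torsion submodule `Γ_I(E)` is an injective `R`-module. -/
theorem torsionGamma_injective (R : Type*) [CommRing R] [IsNoetherianRing R] (I : Ideal R)
    (E : Type*) [AddCommGroup E] [Module R E] [Module.Injective R E] :
    Module.Injective R (torsionGamma I E) := by
  refine injective_of_forall_small_surjective_algebraMap _ fun S _ _ _ _ _ hS => ?_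
  refine ⟨_, restrictScalars_torsionGamma_map hS E I, ?_⟩
  have : IsNoetherianRing S := isNoetherianRing_of_surjective R S (algebraMap R S) hS
  have hE : Module.Injective S E := injective_of_surjective_algebraMap hS E
  exact (torsionGamma_baer _ (Module.Baer.of_injective hE)).injective
end

section
/- Let R be a commutative Noetherian ring, k a nonnegative integer, and M an R-module such that Supp(M) ∩ A(R,k) is an infinite set. If p_1, …, p_n are prime ideals of R with {p_1, …, p_n} ⊆ Ass(M) ∩ A(R,k), then there exist a prime ideal p_{n+1} and a nonzero element x ∈ M such that: (1) p_{n+1} ∈ (Supp(M) ∩ A(R,k)) \ {p_1, …, p_n}; (2) Ann_R(x) ⊆ p_{n+1}; and (3) Rx ∩ Γ_{p_1⋯p_n}(M) = 0. -/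
/-- `A(R, k)` is the set of primes `p` of `R` with `dim (R / p) = k`. -/
def dimSet (R : Type*) [CommRing R] (k : ℕ) : Set (PrimeSpectrum R) :=
  {p | ringKrullDim (R ⧸ p.asIdeal) = k}

/-!
Elements of `A(R, k)` are pairwise incomparable, so a prime `q ∈ A(R, k)` other than `p 1, …, p n`
does not contain `I = p 1 ⋯ p n`; pick `s ∈ I` outside `q`. If moreover `q ∈ Supp M`, some `m ∈ M`
has `Ann m ⊆ q`, and `x = s ^ N • m` still satisfies `Ann x ⊆ q` since `s ∉ q`. As `Rm` is
Noetherian, for large `N` a multiple of `x` killed by a power of `s` is already zero, and every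
element of `Γ_I(M)` is killed by a power of `s`.
-/

section CommRing

variable {R : Type*} [CommRing R]

lemma ringKrullDim_quotient_eq_coheight (p : PrimeSpectrum R) :
    ringKrullDim (R ⧸ p.asIdeal) = Order.coheight p := by
  rw [ringKrullDim_quotient, Order.coheight_eq_krullDim_Ici]
  rfl

lemma mem_dimSet_iff_coheight_eq {k : ℕ} {p : PrimeSpectrum R} :
    p ∈ dimSet R k ↔ Order.coheight p = k := by
  rw [dimSet, Set.mem_ofPred_eq, ringKrullDim_quotient_eq_coheight]
  exact WithBot.coe_inj

lemma isAntichain_dimSet (k : ℕ) : IsAntichain (· ≤ ·) (dimSet R k) := by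
  intro p hp q hq hne hle
  rw [mem_dimSet_iff_coheight_eq] at hp hq
  have hlt : Order.coheight q < Order.coheight p :=
    Order.coheight_strictAnti (lt_of_le_of_ne hle hne) (hq ▸ ENat.natCast_lt_top k)
  exact hlt.ne (hq.trans hp.symm)

lemma not_prod_asIdeal_le_of_mem_dimSet {k : ℕ} {ι : Type*} [Fintype ι] {p : ι → PrimeSpectrum R}
    (hp : ∀ i, p i ∈ dimSet R k) {q : PrimeSpectrum R} (hq : q ∈ dimSet R k)
    (hqp : q ∉ Set.range p) : ¬ ∏ i, (p i).asIdeal ≤ q.asIdeal := by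
  intro hle
  obtain ⟨i, -, hi⟩ := (Ideal.IsPrime.prod_le q.isPrime).mp hle
  exact hqp ⟨i, (isAntichain_dimSet k).eq (hp i) hq hi⟩

variable {M : Type*} [AddCommGroup M] [Module R M]

lemma exists_pow_smul_eq_zero_of_mem_torsionGamma {I : Ideal R} {s : R} (hs : s ∈ I) {x : M}
    (hx : x ∈ torsionGamma I M) : ∃ n : ℕ, s ^ n • x = 0 :=
  hx.imp fun n hn => hn _ (Ideal.pow_mem_pow hs n)

lemma exists_torsionBy_pow_add_eq [IsNoetherian R M] (s : R) :
    ∃ n : ℕ, ∀ j : ℕ, Submodule.torsionBy R M (s ^ (j + n)) = Submodule.torsionBy R M (s ^ n) := by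
  let powTorsion : ℕ →o Submodule R M :=
    ⟨fun n => Submodule.torsionBy R M (s ^ n),
      fun _ _ h => Submodule.torsionBy_le_torsionBy_of_dvd _ _ (pow_dvd_pow s h)⟩
  obtain ⟨n, hn⟩ := monotone_stabilizes_iff_noetherian.mpr inferInstance powTorsion
  exact ⟨n, fun j => (hn (j + n) (Nat.le_add_left n j)).symm⟩

lemma exists_disjoint_span_pow_smul_torsionGamma (m : M) [IsNoetherian R (Submodule.span R {m})]
    {I : Ideal R} {s : R} (hs : s ∈ I) :
    ∃ n : ℕ, Disjoint (Submodule.span R {s ^ n • m}) (torsionGamma I M) := by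
  obtain ⟨n, hn⟩ := exists_torsionBy_pow_add_eq (M := Submodule.span R {m}) s
  refine ⟨n, Submodule.disjoint_def.mpr fun x hx hxΓ => ?_⟩
  obtain ⟨a, rfl⟩ := Submodule.mem_span_singleton.mp hx
  obtain ⟨j, hj⟩ := exists_pow_smul_eq_zero_of_mem_torsionGamma hs hxΓ
  rw [smul_comm a] at hj ⊢
  rw [smul_smul, ← pow_add] at hj
  let y : Submodule.span R {m} := ⟨a • m, Submodule.mem_span_singleton.mpr ⟨a, rfl⟩⟩
  have hy : y ∈ Submodule.torsionBy R _ (s ^ (j + n)) := Subtype.ext hj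
  rw [hn j] at hy
  exact congrArg Subtype.val hy

lemma annihilator_span_smul_le_of_notMem {P : Ideal R} [P.IsPrime] {s : R} (hs : s ∉ P) {m : M}
    (hm : (Submodule.span R {m}).annihilator ≤ P) :
    (Submodule.span R {s • m}).annihilator ≤ P := by
  intro r hr
  rw [Submodule.mem_annihilator_span_singleton, smul_smul,
    ← Submodule.mem_annihilator_span_singleton] at hr
  exact (Ideal.IsPrime.mem_or_mem ‹_› (hm hr)).resolve_right hs

lemma ne_zero_of_annihilator_span_le {P : Ideal R} (hP : P ≠ ⊤) {x : M}
    (hx : (Submodule.span R {x}).annihilator ≤ P) : x ≠ 0 := by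
  rintro rfl
  rw [Submodule.span_zero_singleton, Submodule.annihilator_bot, top_le_iff] at hx
  exact hP hx

lemma exists_annihilator_le_disjoint_torsionGamma [∀ m : M, IsNoetherian R (Submodule.span R {m})]
    {q : PrimeSpectrum R} (hq : q ∈ Module.support R M) {I : Ideal R} (hI : ¬ I ≤ q.asIdeal) :
    ∃ x : M, (Submodule.span R {x}).annihilator ≤ q.asIdeal ∧
      Disjoint (Submodule.span R {x}) (torsionGamma I M) := by
  obtain ⟨m, hm⟩ := Module.mem_support_iff_exists_annihilator.mp hq
  obtain ⟨s, hsI, hsq⟩ := SetLike.not_le_iff_exists.mp hI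
  obtain ⟨n, hn⟩ := exists_disjoint_span_pow_smul_torsionGamma m hsI
  have hsnq : s ^ n ∉ q.asIdeal := fun h => hsq (q.isPrime.mem_of_pow_mem n h)
  exact ⟨s ^ n • m, annihilator_span_smul_le_of_notMem hsnq hm, hn⟩

theorem exists_prime_and_elem_general [∀ m : M, IsNoetherian R (Submodule.span R {m})] {k : ℕ}
    {ι : Type*} [Fintype ι] {p : ι → PrimeSpectrum R} (hp : ∀ i, p i ∈ dimSet R k)
    {q : PrimeSpectrum R} (hq : q ∈ (Module.support R M ∩ dimSet R k) \ Set.range p) :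
    ∃ x : M, x ≠ 0 ∧ (Submodule.span R {x}).annihilator ≤ q.asIdeal ∧
      Submodule.span R {x} ⊓ torsionGamma (∏ i, (p i).asIdeal) M = ⊥ := by
  obtain ⟨⟨hqM, hqk⟩, hqp⟩ := hq
  obtain ⟨x, hxq, hx⟩ :=
    exists_annihilator_le_disjoint_torsionGamma hqM (not_prod_asIdeal_le_of_mem_dimSet hp hqk hqp)
  exact ⟨x, ne_zero_of_annihilator_span_le q.isPrime.ne_top hxq, hxq, hx.eq_bot⟩

end CommRing

/-- If `Supp M ∩ A(R, k)` is infinite and `p 1, …, p n` are primes contained in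
`Ass M ∩ A(R, k)`, then there are a prime `q` and a nonzero `x ∈ M` with
`q ∈ (Supp M ∩ A(R, k)) \ {p 1, …, p n}`, `Ann x ⊆ q` and `Rx ∩ Γ_{p 1 ⋯ p n}(M) = 0`. -/
theorem exists_prime_and_elem {R : Type*} [CommRing R] [IsNoetherianRing R] (k : ℕ)
    {M : Type*} [AddCommGroup M] [Module R M]
    (hinf : (Module.support R M ∩ dimSet R k).Infinite)
    (n : ℕ) (p : Fin n → PrimeSpectrum R)
    (hp : ∀ i, (p i).asIdeal ∈ associatedPrimes R M ∧ p i ∈ dimSet R k) :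
    ∃ (q : PrimeSpectrum R) (x : M), x ≠ 0 ∧
      q ∈ (Module.support R M ∩ dimSet R k) \ Set.range p ∧
      (Submodule.span R {x}).annihilator ≤ q.asIdeal ∧
      Submodule.span R {x} ⊓ torsionGamma (∏ i, (p i).asIdeal) M = ⊥ := by
  obtain ⟨q, hq⟩ := (hinf.sdiff (Set.finite_range p)).nonempty
  exact ⟨q, (exists_prime_and_elem_general (fun i => (hp i).2) hq).imp fun _ hx => ⟨hx.1, hq, hx.2⟩⟩
end

section
/- Let R be a commutative Noetherian ring, k a nonnegative integer, and M an R-module such that for every finitely generated submodule N of M the intersection Supp(M/N) ∩ A(R,k) is an infinite set. Then there exists a submodule L of M such that Ass(M/L) ∩ A(R,k) is an infinite set. -/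
open Filter

section Filter

variable {α : Type*}

lemma iInf_cofinite_inf_principal_neBot {ι : Sort*} [Nonempty ι] {s : ι → Set α}
    (hs : Directed (· ⊇ ·) s) (hinf : ∀ i, (s i).Infinite) :
    (⨅ i, cofinite ⊓ 𝓟 (s i)).NeBot := by
  have hdir : Directed (· ≥ ·) fun i => cofinite ⊓ 𝓟 (s i) := fun i j =>
    (hs i j).imp fun _ h => ⟨inf_le_inf_left _ (principal_mono.2 h.1),
      inf_le_inf_left _ (principal_mono.2 h.2)⟩
  exact iInf_neBot_of_directed' hdir fun i => (hinf i).cofinite_inf_principal_neBot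

lemma exists_frequently_mem_forall_eventually_not_le [PartialOrder α] [WellFoundedGT α]
    {l : Filter α} [l.NeBot] (hl : l ≤ cofinite) :
    ∃ B : Set α, (∃ᶠ p in l, p ∈ B) ∧ ∀ q ∈ B, ∀ᶠ p in l, ¬ q ≤ p := by
  by_cases hne : ∃ q, ∃ᶠ p in l, q ≤ p
  · obtain ⟨q, hq⟩ := exists_maximal_of_wellFoundedGT _ hne
    refine ⟨Set.Ioi q, ?_, fun r hr => not_frequently.1 (hq.not_prop_of_gt hr)⟩
    have hev : ∀ᶠ p in l, p ≠ q := hl (Set.finite_singleton q).compl_mem_cofinite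
    exact (hq.prop.and_eventually hev).mono fun p hp => hp.1.lt_of_ne hp.2.symm
  · simp only [not_exists, not_frequently] at hne
    exact ⟨Set.univ, Frequently.of_forall fun _ => trivial, fun q _ => hne q⟩

lemma exists_set_forall_finite_exists_not_le [PartialOrder α] [WellFoundedGT α] {ι : Sort*}
    [Nonempty ι] {s : ι → Set α} (hs : Directed (· ⊇ ·) s) (hinf : ∀ i, (s i).Infinite) :
    ∃ B : Set α, ∀ i, ∀ F ⊆ B, F.Finite → ∃ p ∈ s i ∩ B, ∀ q ∈ F, ¬ q ≤ p := by
  let l : Filter α := ⨅ i, cofinite ⊓ 𝓟 (s i)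
  have hls (i : ι) : l ≤ cofinite ⊓ 𝓟 (s i) := iInf_le _ i
  have : l.NeBot := iInf_cofinite_inf_principal_neBot hs hinf
  obtain ⟨B, hB, hnle⟩ := exists_frequently_mem_forall_eventually_not_le
    ((hls (Classical.arbitrary ι)).trans inf_le_left)
  refine ⟨B, fun i F hF hFfin => ?_⟩
  have hs_mem : ∀ᶠ p in l, p ∈ s i := (hls i).trans inf_le_right (mem_principal_self _)
  have hF_not_le : ∀ᶠ p in l, ∀ q ∈ F, ¬ q ≤ p :=
    (eventually_all_finite hFfin).2 fun q hq => hnle q (hF hq)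
  obtain ⟨p, hpB, hps, hpF⟩ := (hB.and_eventually (hs_mem.and hF_not_le)).exists
  exact ⟨p, ⟨hps, hpB⟩, hpF⟩

end Filter

section Colon

variable {R : Type*} [CommRing R] {M : Type*} [AddCommGroup M] [Module R M]

lemma mem_sup_smul_span_singleton {L : Submodule R M} {I : Ideal R} {z v : M} :
    v ∈ L ⊔ I • (R ∙ z) ↔ ∃ a ∈ I, v - a • z ∈ L := by
  rw [Submodule.mem_sup]
  constructor
  · rintro ⟨l, hl, w, hw, rfl⟩
    obtain ⟨a, ha, rfl⟩ := Submodule.mem_smul_span_singleton.1 hw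
    exact ⟨a, ha, by rwa [add_sub_cancel_right]⟩
  · rintro ⟨a, ha, h⟩
    exact ⟨_, h, a • z, Submodule.mem_smul_span_singleton.2 ⟨a, ha, rfl⟩, sub_add_cancel _ _⟩

lemma colon_sup_smul_span_singleton_self {L : Submodule R M} {I : Ideal R} {z : M}
    (hI : L.colon {z} ≤ I) : (L ⊔ I • (R ∙ z)).colon {z} = I := by
  ext r
  rw [Submodule.mem_colon_singleton, mem_sup_smul_span_singleton]
  refine ⟨?_, fun hr => ⟨r, hr, by simp⟩⟩
  rintro ⟨a, ha, h⟩
  rw [← sub_smul, ← Submodule.mem_colon_singleton] at h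
  exact (Submodule.sub_mem_iff_left _ ha).1 (hI h)

lemma colon_sup_smul_span_singleton_of_not_le {L : Submodule R M} (I : Ideal R) {x z : M}
    (hz : (L.colon {z}).IsPrime) (hxz : ¬ L.colon {x} ≤ L.colon {z}) :
    (L ⊔ I • (R ∙ z)).colon {x} = L.colon {x} := by
  refine le_antisymm (fun r hr => ?_) (Submodule.colon_mono le_sup_left subset_rfl)
  obtain ⟨s, hsx, hsz⟩ := SetLike.not_le_iff_exists.1 hxz
  rw [Submodule.mem_colon_singleton] at hr hsx ⊢
  obtain ⟨a, -, hra⟩ := mem_sup_smul_span_singleton.1 hr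
  have hsa : s * a ∈ L.colon {z} := by
    have := L.sub_mem (L.smul_mem r hsx) (L.smul_mem s hra)
    rwa [smul_sub, smul_comm r s, sub_sub_cancel, smul_smul,
      ← Submodule.mem_colon_singleton] at this
  have ha : a • z ∈ L := Submodule.mem_colon_singleton.1 ((hz.mem_or_mem hsa).resolve_left hsz)
  exact (Submodule.sub_mem_iff_left _ ha).1 hra

lemma bot_colon_singleton_mk (L : Submodule R M) (x : M) :
    (⊥ : Submodule R (M ⧸ L)).colon {Submodule.Quotient.mk x} = L.colon {x} := by
  ext r
  simp only [Submodule.mem_colon_singleton, Submodule.mem_bot, ← Submodule.Quotient.mk_smul,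
    Submodule.Quotient.mk_eq_zero]

lemma associatedPrimes_quotient (L : Submodule R M) :
    associatedPrimes R (M ⧸ L) = L.associatedPrimes := by
  ext I
  simp only [AssociatedPrimes.mem_iff, IsAssociatedPrime, Submodule.AssociatePrimes.mem_iff,
    Submodule.isAssociatedPrime_def, (Submodule.Quotient.mk_surjective L).exists,
    bot_colon_singleton_mk]

lemma support_quotient_antitone :
    Antitone fun L : Submodule R M => Module.support R (M ⧸ L) := fun _ _ h =>
  Module.support_subset_of_surjective _ (Submodule.factor_surjective h)

lemma exists_colon_singleton_isPrime_le_of_mem_support [IsNoetherianRing R] {L : Submodule R M}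
    {p : PrimeSpectrum R} (hp : p ∈ Module.support R (M ⧸ L)) :
    ∃ z : M, (L.colon {z}).IsPrime ∧ L.colon {z} ≤ p.asIdeal := by
  obtain ⟨m, hm⟩ := Module.mem_support_iff_exists_annihilator.1 hp
  obtain ⟨y, rfl⟩ := Submodule.Quotient.mk_surjective L m
  rw [← Submodule.bot_colon', bot_colon_singleton_mk] at hm
  obtain ⟨P, hP, hPp⟩ := Ideal.exists_minimalPrimes_le hm
  obtain ⟨z, rfl⟩ := Submodule.exists_eq_colon_of_mem_minimalPrimes hP
  exact ⟨z, hP.isPrime, hPp⟩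

end Colon

section Chain

variable {R : Type*} [CommRing R] {M : Type*} [AddCommGroup M] [Module R M]
  {B : Set (PrimeSpectrum R)}

/-- `Ass (M / L) ∩ B`, the set that grows along the construction. Mathlib's `L.associatedPrimes`
consists of the associated primes of `M / L`, see `associatedPrimes_quotient`. -/
def assWithin (B : Set (PrimeSpectrum R)) (L : Submodule R M) : Set (PrimeSpectrum R) :=
  {q | q.asIdeal ∈ L.associatedPrimes} ∩ B

lemma mem_assWithin [IsNoetherianRing R] {L : Submodule R M} {q : PrimeSpectrum R} :
    q ∈ assWithin B L ↔ (∃ x, L.colon {x} = q.asIdeal) ∧ q ∈ B := by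
  simp only [assWithin, Set.mem_inter_iff, Set.mem_ofPred_eq, Submodule.AssociatePrimes.mem_iff,
    Submodule.isAssociatedPrime_iff, q.isPrime, true_and, eq_comm]

/-- `L'` contains `L`, and whenever a prime of `B` is the annihilator of an element of `M` modulo
`L`, it is also the annihilator of that element modulo `L'`. Unlike inclusion of associated primes,
this relation survives directed unions. -/
def PreservesColons (B : Set (PrimeSpectrum R)) (L L' : Submodule R M) : Prop :=
  L ≤ L' ∧ ∀ q ∈ B, ∀ x, L.colon {x} = q.asIdeal → L'.colon {x} = q.asIdeal

namespace PreservesColons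

instance : Std.Refl (PreservesColons B (M := M)) :=
  ⟨fun _ => ⟨le_rfl, fun _ _ _ hx => hx⟩⟩

instance : IsTrans (Submodule R M) (PreservesColons B) :=
  ⟨fun _ _ _ h h' => ⟨h.1.trans h'.1, fun q hq x hx => h'.2 q hq x (h.2 q hq x hx)⟩⟩

lemma assWithin_subset [IsNoetherianRing R] {L L' : Submodule R M} (h : PreservesColons B L L') :
    assWithin B L ⊆ assWithin B L' := by
  intro q hq
  obtain ⟨⟨x, hx⟩, hqB⟩ := mem_assWithin.1 hq
  exact mem_assWithin.2 ⟨⟨x, h.2 q hqB x hx⟩, hqB⟩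

lemma iSup_of_directed {ι : Sort*} {L : ι → Submodule R M} (hL : Directed (PreservesColons B) L)
    (i : ι) : PreservesColons B (L i) (⨆ j, L j) := by
  refine ⟨le_iSup L i, fun q hq x hx => le_antisymm (fun r hr => ?_) ?_⟩
  · have : Nonempty ι := ⟨i⟩
    have hdir : Directed (· ≤ ·) L := hL.mono fun _ _ h => h.1
    obtain ⟨j, hj⟩ := (Submodule.mem_iSup_of_directed L hdir).1 (Submodule.mem_colon_singleton.1 hr)
    obtain ⟨m, him, hjm⟩ := hL i j
    rw [← him.2 q hq x hx]
    exact Submodule.mem_colon_singleton.2 (hjm.1 hj)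
  · exact hx.ge.trans (Submodule.colon_mono (le_iSup L i) subset_rfl)

end PreservesColons

variable [IsNoetherianRing R]

lemma exists_preservesColons_mem_assWithin {L : Submodule R M} (hL : L.FG) {p : PrimeSpectrum R}
    (hp : p ∈ Module.support R (M ⧸ L)) (hpB : p ∈ B) (hass : ∀ q ∈ assWithin B L, ¬ q ≤ p) :
    ∃ L' : Submodule R M, L'.FG ∧ PreservesColons B L L' ∧ p ∈ assWithin B L' := by
  obtain ⟨z, hz, hzp⟩ := exists_colon_singleton_isPrime_le_of_mem_support hp
  refine ⟨L ⊔ p.asIdeal • (R ∙ z),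
    hL.sup (Submodule.FG.smul (IsNoetherian.noetherian _) (Submodule.fg_span_singleton z)),
    ⟨le_sup_left, fun q hq x hx => ?_⟩,
    mem_assWithin.2 ⟨⟨z, colon_sup_smul_span_singleton_self hzp⟩, hpB⟩⟩
  have hqp : ¬ q.asIdeal ≤ p.asIdeal := hass q (mem_assWithin.2 ⟨⟨x, hx⟩, hq⟩)
  rw [colon_sup_smul_span_singleton_of_not_le _ hz fun hle => hqp (hx.ge.trans (hle.trans hzp)), hx]

lemma exists_assWithin_infinite
    (hB : ∀ L : Submodule R M, L.FG → ∀ F : Set (PrimeSpectrum R), F ⊆ B → F.Finite →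
      ∃ p ∈ Module.support R (M ⧸ L) ∩ B, ∀ q ∈ F, ¬ q ≤ p) :
    ∃ L : Submodule R M, (assWithin B L).Infinite := by
  by_contra! hfin
  have hstep (L : {L : Submodule R M // L.FG}) : ∃ L' : {L : Submodule R M // L.FG},
      PreservesColons B L.1 L'.1 ∧ assWithin B L.1 ⊂ assWithin B L'.1 := by
    obtain ⟨p, ⟨hps, hpB⟩, hp⟩ := hB L L.2 _ Set.inter_subset_right (hfin L)
    obtain ⟨L', hL', hpres, hpL'⟩ := exists_preservesColons_mem_assWithin L.2 hps hpB hp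
    exact ⟨⟨L', hL'⟩, hpres, Set.ssubset_iff_exists.2
      ⟨hpres.assWithin_subset, p, hpL', fun hpL => hp p hpL le_rfl⟩⟩
  choose next hpres hssubset using hstep
  let L (n : ℕ) : Submodule R M := (next^[n] ⟨⊥, Submodule.fg_bot⟩).1
  have hL : Directed (PreservesColons B) L := directed_of_isDirected_le <|
    Nat.rel_of_forall_rel_succ_of_le (PreservesColons B) fun n => by
      simpa only [L, Function.iterate_succ_apply'] using hpres _
  have hass : StrictMono fun n => assWithin B (L n) := strictMono_nat_of_lt_succ fun n => by
    simpa only [L, Function.iterate_succ_apply'] using hssubset _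
  exact Set.infinite_of_injective_forall_mem hass.injective
    (fun n => (PreservesColons.iSup_of_directed hL n).assWithin_subset)
    (hfin (⨆ n, L n)).finite_subsets

end Chain

theorem exists_submodule_infinite_ass_general {R : Type*} [CommRing R] [IsNoetherianRing R]
    (A : Set (PrimeSpectrum R)) {M : Type*} [AddCommGroup M] [Module R M]
    (h : ∀ N : Submodule R M, N.FG → (Module.support R (M ⧸ N) ∩ A).Infinite) :
    ∃ L : Submodule R M,
      ({q : PrimeSpectrum R | q.asIdeal ∈ associatedPrimes R (M ⧸ L)} ∩ A).Infinite := by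
  let s (N : {N : Submodule R M // N.FG}) : Set (PrimeSpectrum R) := Module.support R (M ⧸ N.1) ∩ A
  have : Nonempty {N : Submodule R M // N.FG} := ⟨⟨⊥, Submodule.fg_bot⟩⟩
  have hs : Directed (· ⊇ ·) s := fun N₁ N₂ => ⟨⟨N₁.1 ⊔ N₂.1, N₁.2.sup N₂.2⟩,
    Set.inter_subset_inter_left _ (support_quotient_antitone le_sup_left),
    Set.inter_subset_inter_left _ (support_quotient_antitone le_sup_right)⟩
  have : WellFoundedGT (PrimeSpectrum R) :=
    StrictMono.wellFoundedGT (f := PrimeSpectrum.asIdeal) fun _ _ h => h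
  obtain ⟨B, hB⟩ := exists_set_forall_finite_exists_not_le hs fun N => h N N.2
  obtain ⟨L, hL⟩ : ∃ L : Submodule R M, (assWithin (A ∩ B) L).Infinite :=
    exists_assWithin_infinite fun N hN F hF hFfin => by
      obtain ⟨p, ⟨⟨hp, hpA⟩, hpB⟩, hpF⟩ := hB ⟨N, hN⟩ F (hF.trans Set.inter_subset_right) hFfin
      exact ⟨p, ⟨hp, hpA, hpB⟩, hpF⟩
  refine ⟨L, hL.mono ?_⟩
  rw [associatedPrimes_quotient]
  exact Set.inter_subset_inter_right _ Set.inter_subset_left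

/-- If for every finitely generated submodule `N` of `M` the set
`Supp (M / N) ∩ A(R, k)` is infinite, then there is a submodule `L` of `M` such that
`Ass (M / L) ∩ A(R, k)` is infinite. -/
theorem exists_submodule_infinite_ass {R : Type*} [CommRing R] [IsNoetherianRing R] (k : ℕ)
    {M : Type*} [AddCommGroup M] [Module R M]
    (h : ∀ N : Submodule R M, N.FG → (Module.support R (M ⧸ N) ∩ dimSet R k).Infinite) :
    ∃ L : Submodule R M,
      ({q : PrimeSpectrum R | q.asIdeal ∈ associatedPrimes R (M ⧸ L)} ∩ dimSet R k).Infinite :=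
  exists_submodule_infinite_ass_general (dimSet R k) h
end

section
/- Let R be a commutative Noetherian ring and M a nonzero R-module. Then M is a weakly Laskerian R-module if and only if M is an FSF R-module. -/
/-!
Suppose `N` is finitely generated with `Supp (M / N)` finite. Every quotient `M / K` is an extension
of a quotient of `M / N`, whose associated primes lie in `Supp (M / N)`, by a quotient of `N`, which
is finitely generated; hence `Ass (M / K)` is finite.

Conversely, if no such `N` exists, there is a chain of finitely generated subquotients
`N i / K i ↪ N (i + 1) / K (i + 1)` of `M`, each of finite support, acquiring at every step an
associated prime outside the support of the previous subquotient. With `K = ⨆ i, K i`, each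
`N i / K i` embeds in `M / K`, so `Ass (M / K)` is infinite.

For the step from `N / K` with annihilator `J`, the infinite upper set `Supp (M / N)` contains
infinitely many primes with only finitely many primes above them, hence such a prime `q` outside
`V(J)`. Choose `x ∈ M` whose annihilator modulo `N` lies in `q` and put `L = N + R x`. For some `n`,
Artin-Rees gives `J ^ n • L ∩ N ≤ J • N ≤ K`, so `K' = K + (J ^ n * q) • L` meets `N` in `K`, and
`L / K'` is supported in `V(J) ∪ V(q)`. For `f ∈ J ^ n` outside `q`, the annihilator of `f x` modulo
`K'` is exactly `q`.
-/

lemma infinite_setOf_mem_and_finite_Ici {α : Type*} [PartialOrder α] [WellFoundedGT α] {s : Set α}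
    (hs : s.Infinite) (hup : IsUpperSet s) : {a ∈ s | (Set.Ici a).Finite}.Infinite := by
  intro hfin
  have hIci (a : α) : a ∈ s → (Set.Ici a).Finite := by
    induction a using WellFoundedGT.induction with
    | ind a ih =>
      intro ha
      rw [← Set.Ioi_insert]
      refine (hfin.subset fun b hab ↦ ?_).insert a
      have hb : b ∈ s := hup (le_of_lt hab) ha
      exact ⟨hb, ih b hab hb⟩
  exact hs (hfin.subset fun a ha ↦ ⟨ha, hIci a ha⟩)

section

variable {R M : Type*} [CommRing R] [AddCommGroup M] [Module R M]

lemma mem_support_quotient_iff_exists_colon_le {N : Submodule R M} {p : PrimeSpectrum R} :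
    p ∈ Module.support R (M ⧸ N) ↔ ∃ x, N.colon {x} ≤ p.asIdeal := by
  simp_rw [Module.mem_support_iff', N.mkQ_surjective.exists, ← map_smul, Submodule.mkQ_apply, ne_eq,
    Submodule.Quotient.mk_eq_zero, not_imp_not, SetLike.le_def, Submodule.mem_colon_singleton]

lemma colon_mem_associatedPrimes_quotient {K : Submodule R M} {x : M}
    (hx : (K.colon {x}).IsPrime) : K.colon {x} ∈ associatedPrimes R (M ⧸ K) := by
  refine ⟨hx, K.mkQ x, ?_⟩
  have hcolon : (⊥ : Submodule R (M ⧸ K)).colon {K.mkQ x} = K.colon {x} := by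
    ext r
    rw [Submodule.mem_colon_singleton, Submodule.mem_bot, ← map_smul, Submodule.mkQ_apply,
      Submodule.Quotient.mk_eq_zero, Submodule.mem_colon_singleton]
  rw [hcolon, hx.radical]

lemma associatedPrimes_subset_image_support :
    associatedPrimes R M ⊆ PrimeSpectrum.asIdeal '' Module.support R M := by
  rintro p ⟨hp, x, rfl⟩
  refine ⟨⟨_, hp⟩, Module.mem_support_iff_exists_annihilator.mpr ⟨x, ?_⟩, rfl⟩
  rw [← Submodule.bot_colon']
  exact Ideal.le_radical

variable (R M) in
/-- FSF modules: those with a finitely generated submodule whose quotient has finite support. Used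
to pass this property to quotients of `M`. -/
def IsFSF : Prop :=
  ∃ N : Submodule R M, N.FG ∧ (Module.support R (M ⧸ N)).Finite

namespace IsFSF

lemma of_surjective {M' : Type*} [AddCommGroup M'] [Module R M'] (h : IsFSF R M)
    (f : M →ₗ[R] M') (hf : Function.Surjective f) : IsFSF R M' := by
  obtain ⟨N, hN, hfin⟩ := h
  refine ⟨N.map f, hN.map f, hfin.subset ?_⟩
  refine Module.support_subset_of_surjective (N.mapQ _ f (Submodule.le_comap_map f N)) ?_
  rw [← LinearMap.range_eq_top, Submodule.range_mapQ, LinearMap.range_eq_top.mpr hf,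
    Submodule.map_top, Submodule.range_mkQ]

lemma finite_associatedPrimes [IsNoetherianRing R] (h : IsFSF R M) :
    (associatedPrimes R M).Finite := by
  obtain ⟨N, hN, hfin⟩ := h
  have : Module.Finite R N := Module.Finite.iff_fg.mpr hN
  have hquot : (associatedPrimes R (M ⧸ N)).Finite :=
    (hfin.image _).subset associatedPrimes_subset_image_support
  exact ((associatedPrimes.finite R N).union hquot).subset
    (associatedPrimes.subset_union_of_exact N.injective_subtype (LinearMap.exact_subtype_mkQ N))

end IsFSF

instance [IsNoetherianRing R] : WellFoundedGT (PrimeSpectrum R) :=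
  StrictMono.wellFoundedGT (f := PrimeSpectrum.asIdeal) fun _ _ ↦ id

lemma exists_mem_support_quotient_finite_Ici_notMem [IsNoetherianRing R] (hM : ¬ IsFSF R M)
    {N : Submodule R M} (hN : N.FG) {Z : Set (PrimeSpectrum R)} (hZ : Z.Finite) :
    ∃ q ∈ Module.support R (M ⧸ N), (Set.Ici q).Finite ∧ q ∉ Z := by
  have hinf : (Module.support R (M ⧸ N)).Infinite := fun hfin ↦ hM ⟨N, hN, hfin⟩
  obtain ⟨q, ⟨hq, hqfin⟩, hqZ⟩ := (infinite_setOf_mem_and_finite_Ici hinf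
    fun _ _ ↦ Module.mem_support_mono).exists_notMem_finite hZ
  exact ⟨q, hq, hqfin, hqZ⟩

lemma exists_pow_smul_inf_le [IsNoetherianRing R] (J : Ideal R) {N L : Submodule R M}
    (hL : L.FG) (hNL : N ≤ L) : ∃ n, J ^ n • L ⊓ N ≤ J • N := by
  have : Module.Finite R L := Module.Finite.iff_fg.mpr hL
  obtain ⟨k, hk⟩ := J.exists_pow_inf_eq_pow_smul (N.comap L.subtype)
  have hcomap : J ^ (k + 1) • (⊤ : Submodule R L) ⊓ N.comap L.subtype ≤ J • N.comap L.subtype := by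
    rw [hk (k + 1) k.le_succ, Nat.add_sub_cancel_left, pow_one]
    exact Submodule.smul_mono le_rfl inf_le_right
  refine ⟨k + 1, ?_⟩
  simpa only [Submodule.map_smul'', Submodule.map_inf _ L.injective_subtype, Submodule.map_top,
    Submodule.range_subtype, Submodule.map_comap_subtype, inf_eq_right.mpr hNL]
    using Submodule.map_mono (f := L.subtype) hcomap

lemma exists_forall_le_pow_sup_smul_inf_eq [IsNoetherianRing R] {J : Ideal R}
    {K N L : Submodule R M} (hL : L.FG) (hNL : N ≤ L) (hKN : K ≤ N) (hJ : J • N ≤ K) :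
    ∃ n, ∀ I ≤ J ^ n, (K ⊔ I • L) ⊓ N = K := by
  obtain ⟨n, hn⟩ := exists_pow_smul_inf_le J hL hNL
  refine ⟨n, fun I hI ↦ ?_⟩
  rw [sup_inf_assoc_of_le _ hKN, sup_eq_left]
  calc I • L ⊓ N ≤ J ^ n • L ⊓ N := inf_le_inf_right N (Submodule.smul_mono_left hI)
    _ ≤ J • N := hn
    _ ≤ K := hJ

lemma sup_mul_smul_colon_singleton_smul_eq {K N : Submodule R M} {q I : Ideal R} [q.IsPrime]
    {x : M} {f : R} (hKN : K ≤ N) (hx : N.colon {x} ≤ q) (hfI : f ∈ I) (hfq : f ∉ q) :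
    (K ⊔ (I * q) • (N ⊔ R ∙ x)).colon {f • x} = q := by
  refine le_antisymm (fun r hr ↦ ?_) fun r hr ↦ ?_
  · have hle : K ⊔ (I * q) • (N ⊔ R ∙ x) ≤ N ⊔ q • (R ∙ x) := by
      rw [Submodule.smul_sup]
      exact sup_le (hKN.trans le_sup_left)
        (sup_le_sup Submodule.smul_le_right (Submodule.smul_mono_left Ideal.mul_le_right))
    obtain ⟨a, ha, b, hb, hab⟩ :=
      Submodule.mem_sup.mp (hle (Submodule.mem_colon_singleton.mp hr))
    obtain ⟨c, hc, rfl⟩ := Submodule.mem_smul_span_singleton.mp hb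
    have hsub : r * f - c ∈ q := hx <| Submodule.mem_colon_singleton.mpr <| by
      rwa [sub_smul, mul_smul, ← hab, add_sub_cancel_right]
    have hmul : r * f ∈ q := (Submodule.sub_mem_iff_left q hc).mp hsub
    exact (Ideal.IsPrime.mem_or_mem ‹_› hmul).resolve_right hfq
  · rw [Submodule.mem_colon_singleton, smul_smul, mul_comm r f]
    exact Submodule.mem_sup_right (Submodule.smul_mem_smul (Ideal.mul_mem_mul hfI hr)
      (Submodule.mem_sup_right (Submodule.mem_span_singleton_self x)))

variable (R M) in
/-- A finitely generated subquotient `num / den` of `M` with finite support: a stage in building a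
quotient of `M` with infinitely many associated primes. The support is encoded as the zero locus of
the annihilator `den.colon num` of `num / den`. -/
structure FiniteSupportSubquotient where
  num : Submodule R M
  den : Submodule R M
  fg_num : num.FG
  den_le_num : den ≤ num
  finite_zeroLocus : (PrimeSpectrum.zeroLocus (den.colon (num : Set M) : Set R)).Finite

namespace FiniteSupportSubquotient

/-- `s ≤ t` means that the inclusion `s.num ≤ t.num` induces an injective map
`s.num / s.den → t.num / t.den`. -/
instance : Preorder (FiniteSupportSubquotient R M) where
  le s t := s.num ≤ t.num ∧ t.den ⊓ s.num = s.den
  le_refl s := ⟨le_rfl, inf_eq_left.mpr s.den_le_num⟩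
  le_trans s t u hst htu := by
    refine ⟨hst.1.trans htu.1, ?_⟩
    rw [← hst.2, ← htu.2, inf_assoc, inf_eq_right.mpr hst.1]

instance : Inhabited (FiniteSupportSubquotient R M) where
  default :=
    { num := ⊥
      den := ⊥
      fg_num := Submodule.fg_bot
      den_le_num := le_rfl
      finite_zeroLocus := by simp [Submodule.colon_singleton_zero] }

lemma num_mono : Monotone (num : FiniteSupportSubquotient R M → Submodule R M) :=
  fun _ _ hst ↦ hst.1

lemma den_mono : Monotone (den : FiniteSupportSubquotient R M → Submodule R M) :=
  fun _ _ hst ↦ hst.2.symm.trans_le inf_le_left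

lemma iSup_den_inf_num {ι : Type*} [Preorder ι] [IsDirectedOrder ι]
    {s : ι → FiniteSupportSubquotient R M} (hs : Monotone s) (i : ι) :
    (⨆ j, (s j).den) ⊓ (s i).num = (s i).den := by
  have hdir : Directed (· ≤ ·) fun j ↦ (s j).den := (den_mono.comp hs).directed_le
  rw [hdir.iSup_inf_eq]
  refine le_antisymm (iSup_le fun j ↦ ?_) (le_iSup_of_le i (le_inf le_rfl (s i).den_le_num))
  obtain ⟨k, hik, hjk⟩ := exists_ge_ge i j
  calc (s j).den ⊓ (s i).num ≤ (s k).den ⊓ (s i).num := inf_le_inf_right _ (den_mono (hs hjk))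
    _ = (s i).den := (hs hik).2

lemma exists_ge_colon_isPrime [IsNoetherianRing R] (hM : ¬ IsFSF R M)
    (s : FiniteSupportSubquotient R M) :
    ∃ t ≥ s, ∃ y ∈ t.num, (t.den.colon {y}).IsPrime ∧
      ¬ s.den.colon (s.num : Set M) ≤ t.den.colon {y} := by
  set J := s.den.colon (s.num : Set M)
  obtain ⟨q, hq, hqfin, hJq⟩ :=
    exists_mem_support_quotient_finite_Ici_notMem hM s.fg_num s.finite_zeroLocus
  obtain ⟨x, hx⟩ := mem_support_quotient_iff_exists_colon_le.mp hq
  set L := s.num ⊔ R ∙ x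
  have hL : L.FG := s.fg_num.sup (Submodule.fg_span_singleton x)
  have hsL : s.num ≤ L := le_sup_left
  have hJs : J • s.num ≤ s.den :=
    Submodule.smul_le.mpr fun r hr m hm ↦ Submodule.mem_colon.mp hr m hm
  obtain ⟨n, hn⟩ := exists_forall_le_pow_sup_smul_inf_eq hL hsL s.den_le_num hJs
  obtain ⟨f, hfJ, hfq⟩ : ∃ f ∈ J ^ n, f ∉ q.asIdeal :=
    SetLike.not_le_iff_exists.mp fun h ↦ hJq (q.2.le_of_pow_le h)
  set K := s.den ⊔ (J ^ n * q.asIdeal) • L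
  have hcolon : K.colon {f • x} = q.asIdeal :=
    sup_mul_smul_colon_singleton_smul_eq s.den_le_num hx hfJ hfq
  have hKs : K ⊓ s.num = s.den := hn _ Ideal.mul_le_left
  have hfin : (PrimeSpectrum.zeroLocus (K.colon (L : Set M) : Set R)).Finite := by
    have hle : J ^ n * q.asIdeal ≤ K.colon (L : Set M) := fun r hr ↦
      Submodule.mem_colon.mpr fun m hm ↦ Submodule.mem_sup_right (Submodule.smul_mem_smul hr hm)
    refine (s.finite_zeroLocus.union hqfin).subset fun p hp ↦ ?_
    exact (p.2.mul_le.mp (hle.trans hp)).imp_left p.2.le_of_pow_le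
  refine ⟨⟨L, K, hL, sup_le (s.den_le_num.trans hsL) Submodule.smul_le_right, hfin⟩, ⟨hsL, hKs⟩,
    f • x, L.smul_mem f (Submodule.mem_sup_right (Submodule.mem_span_singleton_self x)), ?_⟩
  rw [hcolon]
  exact ⟨q.2, hJq⟩

end FiniteSupportSubquotient

open FiniteSupportSubquotient in
lemma exists_infinite_associatedPrimes_quotient [IsNoetherianRing R] (hM : ¬ IsFSF R M) :
    ∃ K : Submodule R M, (associatedPrimes R (M ⧸ K)).Infinite := by
  choose next hle y hy hprime hnew using exists_ge_colon_isPrime hM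
  let s (i : ℕ) : FiniteSupportSubquotient R M := next^[i] default
  have hsucc (i : ℕ) : s (i + 1) = next (s i) := Function.iterate_succ_apply' next i default
  have hs : Monotone s := monotone_nat_of_le_succ fun i ↦ (hsucc i).symm ▸ hle (s i)
  let K : Submodule R M := ⨆ i, (s i).den
  have hcolon (i : ℕ) : K.colon {y (s i)} = (next (s i)).den.colon {y (s i)} := by
    rw [← hsucc, ← iSup_den_inf_num hs (i + 1), hsucc,
      Submodule.colon_inf_eq_left_of_subset (Set.singleton_subset_iff.mpr (hy (s i)))]
  have hne {i j : ℕ} (hij : i < j) : K.colon {y (s i)} ≠ K.colon {y (s j)} := by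
    have hmem : y (s i) ∈ (s j).num := num_mono (hs hij) ((hsucc i).symm ▸ hy (s i))
    have hann : (s j).den.colon ((s j).num : Set M) ≤ K.colon {y (s i)} :=
      Submodule.colon_mono (le_iSup (fun i ↦ (s i).den) j) (Set.singleton_subset_iff.mpr hmem)
    intro heq
    exact hnew (s j) (hcolon j ▸ heq ▸ hann)
  refine ⟨K, Set.infinite_of_injective_forall_mem (f := fun i ↦ K.colon {y (s i)})
    (.of_lt_imp_ne fun _ _ ↦ hne) fun i ↦ colon_mem_associatedPrimes_quotient ?_⟩
  rw [hcolon]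
  exact hprime (s i)

end

/-- Over a Noetherian ring `R`, a nonzero `R`-module `M` is weakly Laskerian
(i.e. `Ass (M / N)` is finite for every submodule `N` of `M`) if and only if it is
FSF (i.e. there is a finitely generated submodule `N` of `M` with `Supp (M / N)` finite). -/
theorem weaklyLaskerian_iff_fsf {R : Type*} [CommRing R] [IsNoetherianRing R]
    {M : Type*} [AddCommGroup M] [Module R M] [Nontrivial M] :
    (∀ N : Submodule R M, (associatedPrimes R (M ⧸ N)).Finite) ↔
      ∃ N : Submodule R M, N.FG ∧ (Module.support R (M ⧸ N)).Finite := by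
  change _ ↔ IsFSF R M
  refine ⟨fun h ↦ ?_, fun h K ↦
    (h.of_surjective K.mkQ K.mkQ_surjective).finite_associatedPrimes⟩
  by_contra hM
  obtain ⟨K, hK⟩ := exists_infinite_associatedPrimes_quotient hM
  exact hK (h K)
end

section
/- Let (R, m) → (S, n) be a local homomorphism of commutative Noetherian local rings such that S is finitely generated as an R-module. Then every weakly Laskerian S-module is a weakly Laskerian R-module (via restriction of scalars). -/
/-!
An infinite set of primes of a Noetherian ring contains an infinite antichain, as the primes satisfy
both chain conditions. So if `Ass_R (M ⧸ N)` is infinite, it contains an infinite antichain `A`, and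
enlarging `N` one may assume `Ass_R (M ⧸ N) = A`.

Let `C` be the largest `S`-submodule of `M` contained in `N`. Sending `m` to `s ↦ s • m` embeds
`M ⧸ C` in `Hom_R(S, M ⧸ N)`, so `Ass_R (M ⧸ C) ⊆ A` because `S` is finite over `R`. Conversely
`M ⧸ C` surjects onto `M ⧸ N`, so each `p ∈ A` lies in its support and hence above some
`q ∈ Ass_R (M ⧸ C) ⊆ A`; as `A` is an antichain, `q = p`. Thus `Ass_R (M ⧸ C) = A` is infinite,
although it consists of contractions of the finitely many primes of `Ass_S (M ⧸ C)`.
-/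

open Submodule

section Antichains

theorem exists_infinite_isAntichain {α : Type*} [PartialOrder α] [Infinite α] [WellFoundedLT α]
    [WellFoundedGT α] : ∃ t : Set α, t.Infinite ∧ IsAntichain (· ≤ ·) t := by
  by_contra! h
  have : WellQuasiOrderedLE α :=
    wellQuasiOrderedLE_iff.2 ⟨inferInstance, fun t ht ↦
      Set.not_infinite.1 fun hinf ↦ h t hinf ht⟩
  let f := Infinite.natEmbedding α
  obtain ⟨g, hg⟩ := wellQuasiOrdered_le.exists_monotone_subseq f
  have hmono : Monotone (f ∘ g) := fun m n ↦ hg m n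
  exact not_strictMono_of_wellFoundedGT _
    (hmono.strictMono_of_injective (f.injective.comp g.injective))

theorem exists_infinite_isAntichain_subset_of_isPrime {R : Type*} [CommRing R] [IsNoetherianRing R]
    {B : Set (Ideal R)} (hB : B.Infinite) (hprime : ∀ p ∈ B, p.IsPrime) :
    ∃ A ⊆ B, A.Infinite ∧ IsAntichain (· ≤ ·) A := by
  have : Infinite B := hB.to_subtype
  have hheight : StrictMono fun p : B ↦ p.1.height := fun p q hpq ↦ by
    have := hprime p p.2
    exact Ideal.height_strict_mono_of_isPrime hpq
  have : WellFoundedLT B := hheight.wellFoundedLT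
  have : WellFoundedGT B := StrictMono.wellFoundedGT (f := Subtype.val) fun _ _ h ↦ h
  obtain ⟨t, ht, hanti⟩ := exists_infinite_isAntichain (α := B)
  exact ⟨(↑) '' t, Subtype.coe_image_subset B t, ht.image Subtype.val_injective.injOn,
    hanti.image_embedding (OrderEmbedding.subtype (· ∈ B))⟩

end Antichains

section AssociatedPrimes

variable {R M M' : Type*} [CommRing R] [AddCommGroup M] [Module R M] [AddCommGroup M'] [Module R M']

theorem associatedPrimes_sSup_subset {c : Set (Submodule R M)} (hne : c.Nonempty)
    (hc : DirectedOn (· ≤ ·) c) :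
    associatedPrimes R ↥(sSup c) ⊆ ⋃ K ∈ c, associatedPrimes R K := by
  rintro p ⟨hprime, ⟨x, hx⟩, hp⟩
  obtain ⟨K, hK, hxK⟩ := (mem_sSup_of_directed hne hc).1 hx
  refine Set.mem_biUnion hK ⟨hprime, ⟨x, hxK⟩, hp.trans (congrArg Ideal.radical ?_)⟩
  ext r
  simp [Subtype.ext_iff]

theorem associatedPrimes_comap_mkQ_subset (K : Submodule R M) (L : Submodule R (M ⧸ K)) :
    associatedPrimes R (L.comap K.mkQ) ⊆ associatedPrimes R K ∪ associatedPrimes R L := by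
  have hK : K ≤ L.comap K.mkQ := K.le_comap_mkQ L
  refine associatedPrimes.subset_union_of_exact (f := inclusion hK)
    (g := K.mkQ.restrict fun _ hx ↦ hx) (inclusion_injective hK) fun x ↦ ?_
  simp [Subtype.ext_iff]

theorem associatedPrimes_linearMap_subset [Module.Finite R M] :
    associatedPrimes R (M →ₗ[R] M') ⊆ associatedPrimes R M' := by
  rintro p ⟨hprime, f, hf⟩
  obtain ⟨T, hT⟩ := Module.Finite.fg_top (R := R) (M := M)
  have hinf : T.inf (fun x ↦ (⊥ : Submodule R M').colon {f x}) ≤ p := by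
    rw [hf]
    refine le_trans (fun r hr ↦ ?_) Ideal.le_radical
    simp only [mem_finsetInf, mem_colon_singleton, mem_bot] at hr ⊢
    exact LinearMap.ext_on hT hr
  obtain ⟨x, -, hx⟩ := hprime.inf_le'.1 hinf
  refine ⟨hprime, f x, le_antisymm ?_ (hprime.radical_le_iff.2 hx)⟩
  rw [hf]
  refine Ideal.radical_mono fun r hr ↦ ?_
  simp only [mem_colon_singleton, mem_bot] at hr ⊢
  rw [← LinearMap.smul_apply, hr, LinearMap.zero_apply]

theorem mem_support_of_mem_associatedPrimes {p : PrimeSpectrum R}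
    (hp : p.asIdeal ∈ associatedPrimes R M) : p ∈ Module.support R M := by
  obtain ⟨-, x, hx⟩ := hp
  refine Module.mem_support_iff_exists_annihilator.2 ⟨x, ?_⟩
  rw [hx]
  refine le_trans (fun r hr ↦ ?_) Ideal.le_radical
  simpa [mem_annihilator_span_singleton] using hr

theorem exists_mem_associatedPrimes_le_of_mem_support [IsNoetherianRing R] {p : PrimeSpectrum R}
    (hp : p ∈ Module.support R M) : ∃ q ∈ associatedPrimes R M, q ≤ p.asIdeal := by
  obtain ⟨x, hx⟩ := Module.mem_support_iff_exists_annihilator.1 hp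
  obtain ⟨q, hq, hqp⟩ := Ideal.exists_minimalPrimes_le hx
  exact ⟨q, associatedPrimes.subset_of_injective (span R {x}).injective_subtype
    (Module.associatedPrimes.minimalPrimes_annihilator_subset_associatedPrimes R _ hq), hqp⟩

theorem associatedPrimes_subset_of_surjective_of_isAntichain [IsNoetherianRing R] {f : M →ₗ[R] M'}
    (hf : Function.Surjective f) (hanti : IsAntichain (· ≤ ·) (associatedPrimes R M'))
    (hsub : associatedPrimes R M ⊆ associatedPrimes R M') :
    associatedPrimes R M' ⊆ associatedPrimes R M := by
  intro p hp
  have hsupp : ⟨p, hp.isPrime⟩ ∈ Module.support R M :=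
    Module.support_subset_of_surjective f hf (mem_support_of_mem_associatedPrimes hp)
  obtain ⟨q, hq, hqp⟩ := exists_mem_associatedPrimes_le_of_mem_support hsupp
  exact hanti.eq (hsub hq) hp hqp ▸ hq

theorem exists_maximal_disjoint_associatedPrimes (A : Set (Ideal R)) :
    ∃ K : Submodule R M, Maximal (fun K : Submodule R M ↦ Disjoint (associatedPrimes R K) A) K := by
  have hbot : Disjoint (associatedPrimes R (⊥ : Submodule R M)) A := by
    simp [associatedPrimes.eq_empty_of_subsingleton]
  obtain ⟨K, -, hK⟩ := zorn_le_nonempty₀ {K : Submodule R M | Disjoint (associatedPrimes R K) A}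
    (fun c hc hchain L hL ↦ ⟨sSup c, (Set.disjoint_iUnion₂_left.2 hc).mono_left
      (associatedPrimes_sSup_subset ⟨L, hL⟩ hchain.directedOn), fun _ ↦ le_sSup⟩) ⊥ hbot
  exact ⟨K, hK⟩

theorem exists_associatedPrimes_quotient_eq [IsNoetherianRing R] {A : Set (Ideal R)}
    (hA : A ⊆ associatedPrimes R M) :
    ∃ K : Submodule R M, associatedPrimes R (M ⧸ K) = A := by
  obtain ⟨K, hK⟩ := exists_maximal_disjoint_associatedPrimes (M := M) A
  refine ⟨K, Set.Subset.antisymm (fun p hp ↦ ?_) fun p hp ↦ ?_⟩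
  · -- A copy of `R ⧸ p` in `M ⧸ K` pulls back to a submodule larger than `K`; by maximality that
    -- submodule has an associated prime in `A`, which can only be `p`.
    obtain ⟨hprime, f, hf⟩ := (isAssociatedPrime_iff_exists_injective_linearMap p (M ⧸ K)).1 hp
    have hrange : associatedPrimes R (LinearMap.range f) = {p} := by
      rw [← LinearEquiv.AssociatedPrimes.eq (.ofInjective f hf),
        associatedPrimes.eq_singleton_of_isPrimary hprime.isPrimary, hprime.radical]
    have hnot : ¬ Disjoint (associatedPrimes R ((LinearMap.range f).comap K.mkQ)) A := fun h ↦ by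
      have hle := hK.le_of_ge h (K.le_comap_mkQ _)
      have hbot : LinearMap.range f = ⊥ := by
        rw [← le_bot_iff, ← comap_le_comap_iff_of_surjective K.mkQ_surjective]
        simpa using hle
      rw [hbot, associatedPrimes.eq_empty_of_subsingleton] at hrange
      exact Set.singleton_ne_empty p hrange.symm
    obtain ⟨q, hq, hqA⟩ := Set.not_disjoint_iff.1 hnot
    have hqK : q ∉ associatedPrimes R K := fun h ↦ hK.prop.notMem_of_mem_left h hqA
    have hqp : q ∈ ({p} : Set (Ideal R)) :=
      hrange ▸ (associatedPrimes_comap_mkQ_subset K _ hq).resolve_left hqK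
    exact hqp ▸ hqA
  · exact (associatedPrimes.subset_union_of_exact K.injective_subtype
      (LinearMap.exact_subtype_mkQ K) (hA hp)).resolve_left fun h ↦ hK.prop.notMem_of_mem_left h hp

theorem exists_associatedPrimes_quotient_eq_of_subset [IsNoetherianRing R] {N : Submodule R M}
    {A : Set (Ideal R)} (hA : A ⊆ associatedPrimes R (M ⧸ N)) :
    ∃ N' ≥ N, associatedPrimes R (M ⧸ N') = A := by
  obtain ⟨K, hK⟩ := exists_associatedPrimes_quotient_eq hA
  let π := K.mkQ ∘ₗ N.mkQ
  refine ⟨LinearMap.ker π, fun x hx ↦ ?_, ?_⟩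
  · simp [π, (Quotient.mk_eq_zero N).2 hx]
  · rw [← hK]
    exact LinearEquiv.AssociatedPrimes.eq
      (π.quotKerEquivOfSurjective (K.mkQ_surjective.comp N.mkQ_surjective))

end AssociatedPrimes

/-- The largest `S`-submodule of `M` contained in the `R`-submodule `N`: it consists of the `m` with
`S • m ⊆ N`. The finiteness hypothesis over `S` is applied to the quotient of `M` by it. -/
def scalarCore {R M : Type*} (S : Type*) [CommRing R] [CommRing S] [AddCommGroup M] [Module R M]
    [Module S M] (N : Submodule R M) : Submodule S M where
  carrier := {m | ∀ s : S, s • m ∈ N}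
  add_mem' ha hb s := by rw [smul_add]; exact N.add_mem (ha s) (hb s)
  zero_mem' s := by rw [smul_zero]; exact N.zero_mem
  smul_mem' t m hm s := by rw [smul_smul]; exact hm _

theorem mem_scalarCore {R S M : Type*} [CommRing R] [CommRing S] [AddCommGroup M] [Module R M]
    [Module S M] {N : Submodule R M} {m : M} : m ∈ scalarCore S N ↔ ∀ s : S, s • m ∈ N :=
  Iff.rfl

section ScalarExtension

variable {R M : Type*} (S : Type*) [CommRing R] [CommRing S] [Algebra R S]
  [AddCommGroup M] [Module R M] [Module S M] [IsScalarTower R S M]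

theorem restrictScalars_scalarCore_le (N : Submodule R M) :
    (scalarCore S N).restrictScalars R ≤ N :=
  fun m hm ↦ by simpa using mem_scalarCore.1 hm 1

theorem associatedPrimes_quotient_scalarCore_subset [Module.Finite R S] (N : Submodule R M) :
    associatedPrimes R (M ⧸ scalarCore S N) ⊆ associatedPrimes R (M ⧸ N) := by
  let θ : M →ₗ[R] S →ₗ[R] M ⧸ N :=
    LinearMap.mk₂ R (fun m s ↦ N.mkQ (s • m)) (by simp)
      (fun r m s ↦ by rw [smul_comm, map_smul]) (by simp [add_smul]) (by simp)
  have hker : (scalarCore S N).restrictScalars R = LinearMap.ker θ := by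
    ext m
    simp [θ, mem_scalarCore, LinearMap.ext_iff]
  let e : (M ⧸ scalarCore S N) ≃ₗ[R] LinearMap.range θ :=
    (Quotient.restrictScalarsEquiv R (scalarCore S N)).symm ≪≫ₗ
      quotEquivOfEq _ _ hker ≪≫ₗ θ.quotKerEquivRange
  rw [LinearEquiv.AssociatedPrimes.eq e]
  exact (associatedPrimes.subset_of_injective (LinearMap.range θ).injective_subtype).trans
    associatedPrimes_linearMap_subset

theorem associatedPrimes_quotient_scalarCore [IsNoetherianRing R] [Module.Finite R S]
    {N : Submodule R M} (hN : IsAntichain (· ≤ ·) (associatedPrimes R (M ⧸ N))) :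
    associatedPrimes R (M ⧸ scalarCore S N) = associatedPrimes R (M ⧸ N) := by
  have hsub := associatedPrimes_quotient_scalarCore_subset S N
  let π : (M ⧸ scalarCore S N) →ₗ[R] M ⧸ N := factor (restrictScalars_scalarCore_le S N) ∘ₗ
    (Quotient.restrictScalarsEquiv R (scalarCore S N)).symm.toLinearMap
  have hπ : Function.Surjective π :=
    (factor_surjective (restrictScalars_scalarCore_le S N)).comp (LinearEquiv.surjective _)
  exact hsub.antisymm (associatedPrimes_subset_of_surjective_of_isAntichain hπ hN hsub)

theorem associatedPrimes_subset_image_comap [Algebra.IsIntegral R S] [IsNoetherianRing S] :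
    associatedPrimes R M ⊆ Ideal.comap (algebraMap R S) '' associatedPrimes S M := by
  rintro p ⟨hprime, x, hx⟩
  have hp : p = ((span S {x}).annihilator.comap (algebraMap R S)).radical := by
    rw [hx]
    congr 1
    ext r
    simp
  obtain ⟨P, hxP, hP, rfl⟩ := Ideal.exists_ideal_over_prime_of_isIntegral p _
    (Ideal.le_radical.trans hp.ge)
  obtain ⟨q, hq, hqP⟩ := exists_mem_associatedPrimes_le_of_mem_support (p := ⟨P, hP⟩)
    (Module.mem_support_iff_of_finite.2 hxP)
  refine ⟨q, associatedPrimes.subset_of_injective (span S {x}).injective_subtype hq,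
    le_antisymm (Ideal.comap_mono hqP) ?_⟩
  have := hq.isPrime
  rw [hp, (Ideal.IsPrime.comap _).radical_le_iff]
  exact Ideal.comap_mono (annihilator_top.ge.trans hq.annihilator_le)

end ScalarExtension

theorem weaklyLaskerian_of_finite_local_extension_general
    {R S : Type*} [CommRing R] [CommRing S] [IsNoetherianRing R] [Algebra R S] [Module.Finite R S]
    {M : Type*} [AddCommGroup M] [Module S M] [Module R M] [IsScalarTower R S M]
    (hwl : ∀ N : Submodule S M, (associatedPrimes S (M ⧸ N)).Finite) :
    ∀ N : Submodule R M, (associatedPrimes R (M ⧸ N)).Finite := by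
  intro N
  by_contra hinf
  have : IsNoetherianRing S := IsNoetherianRing.of_finite R S
  obtain ⟨A, hAN, hA, hanti⟩ :=
    exists_infinite_isAntichain_subset_of_isPrime hinf fun _ hp ↦ hp.isPrime
  obtain ⟨N', -, rfl⟩ := exists_associatedPrimes_quotient_eq_of_subset hAN
  rw [← associatedPrimes_quotient_scalarCore S hanti] at hA
  exact hA (((hwl _).image _).subset (associatedPrimes_subset_image_comap S))

/-- If `(R, m) → (S, n)` is a local homomorphism of Noetherian local rings such that `S` is
finitely generated as an `R`-module, then every weakly Laskerian `S`-module `M` is a weakly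
Laskerian `R`-module (via restriction of scalars). -/
theorem weaklyLaskerian_of_finite_local_extension
    {R S : Type*} [CommRing R] [CommRing S] [IsNoetherianRing R] [IsNoetherianRing S]
    [IsLocalRing R] [IsLocalRing S] [Algebra R S] [IsLocalHom (algebraMap R S)]
    [Module.Finite R S]
    {M : Type*} [AddCommGroup M] [Module S M] [Module R M] [IsScalarTower R S M]
    (hwl : ∀ N : Submodule S M, (associatedPrimes S (M ⧸ N)).Finite) :
    ∀ N : Submodule R M, (associatedPrimes R (M ⧸ N)).Finite := by
  exact weaklyLaskerian_of_finite_local_extension_general hwl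
end

section
/- Let a be an ideal of a commutative Noetherian ring R and let M be a finitely generated R-module. Let t be a nonnegative integer such that for each i < t, either the local cohomology module H^i_a(M) is finitely generated or Supp(H^i_a(M)) is a finite set. Then Ass_R(H^t_a(M)) is a finite set. -/
universe u

/-!
Fix a finitely generated `a`-torsion module `N`, such as `R ⧸ a`, and a Serre class `P` of modules.
If `Hⁱ_a(X) ∈ P` for `i < t` and `Extᵗ(N, X) ∈ P`, then `Hom(N, Hᵗ_a(X)) ∈ P`: passing from `X` to
`X ⧸ Γ_a(X)` changes neither the higher local cohomology nor the hypotheses, and once `Γ_a(X) = 0`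
the cosyzygy of `X` in an injective module without `a`-torsion shifts all degrees down by one.

The modules that are extensions of a module with finite support by a finitely generated one form
a Serre class, and each of them has finitely many associated primes. Since `Hᵗ_a(X)` is `a`-torsion,
its associated primes are among those of `Hom(R ⧸ a, Hᵗ_a(X))`.
-/

namespace SerreLocalCohomology

open CategoryTheory Abelian Limits

section Definition

variable {R : Type u} [CommRing R] (a : Ideal R)

/-- The module `R/aⁿ`. -/
abbrev powQuotient (n : ℕ) : ModuleCat.{u} R := ModuleCat.of R (R ⧸ a ^ n)

/-- The canonical surjection `R/aⁿ ⟶ R/aᵐ` for `m ≤ n`. -/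
def powQuotientMap {m n : ℕ} (h : m ≤ n) : powQuotient a n ⟶ powQuotient a m :=
  ModuleCat.ofHom (Submodule.factor (Ideal.pow_le_pow_right h))

lemma powQuotientMap_self (n : ℕ) : powQuotientMap a (le_refl n) = 𝟙 _ := by
  ext
  rfl

lemma powQuotientMap_comp {l m n : ℕ} (h : l ≤ m) (h' : m ≤ n) :
    powQuotientMap a h' ≫ powQuotientMap a h = powQuotientMap a (h.trans h') := by
  ext
  rfl

/-- The transition map `Extⁱ(R/aᵐ, X) → Extⁱ(R/aⁿ, X)` for `m ≤ n`. -/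
noncomputable def extTransition (i : ℕ) (X : ModuleCat.{u} R) (m n : ℕ) (h : m ≤ n) :
    Ext (powQuotient a m) X i →ₗ[R] Ext (powQuotient a n) X i :=
  Ext.precompOfLinear (Ext.mk₀ (powQuotientMap a h)) R X (zero_add i)

lemma extTransition_apply {i : ℕ} {X : ModuleCat.{u} R} {m n : ℕ} (h : m ≤ n)
    (x : Ext (powQuotient a m) X i) :
    extTransition a i X m n h x = (Ext.mk₀ (powQuotientMap a h)).comp x (zero_add i) := rfl

instance (i : ℕ) (X : ModuleCat.{u} R) :
    DirectedSystem (fun n ↦ Ext (powQuotient a n) X i) (extTransition a i X · · ·) where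
  map_self n x := by
    rw [extTransition_apply, powQuotientMap_self, Ext.mk₀_id_comp]
  map_map l m n hlm hmn x := by
    rw [extTransition_apply, extTransition_apply, extTransition_apply,
      Ext.mk₀_comp_mk₀_assoc, powQuotientMap_comp]

/-- The local cohomology module `Hⁱ_a(X)`, as the direct limit of the modules `Extⁱ(R/aⁿ, X)`
with `Ext` taken in the derived category. It is identified with Mathlib's `localCohomology`, which
is based on `Ext` as a left derived functor, in `localCohomologyEquiv`. -/
abbrev LocalCohomology (i : ℕ) (X : ModuleCat.{u} R) : Type u :=
  Module.DirectLimit (fun n ↦ Ext (powQuotient a n) X i) (extTransition a i X)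

namespace LocalCohomology

variable {a} {i j k : ℕ} {X Y Z : ModuleCat.{u} R}

/-- The class in `Hⁱ_a(X)` of an element of `Extⁱ(R/aⁿ, X)`. -/
noncomputable abbrev of (n : ℕ) : Ext (powQuotient a n) X i →ₗ[R] LocalCohomology a i X :=
  Module.DirectLimit.of R ℕ (fun n ↦ Ext (powQuotient a n) X i) (extTransition a i X) n

/-- The map `Hⁱ_a(X) → Hⁱ⁺ʲ_a(Y)` induced by a class in `Extʲ(X, Y)`. -/
noncomputable def postcomp (e : Ext X Y j) (h : i + j = k) :
    LocalCohomology a i X →ₗ[R] LocalCohomology a k Y :=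
  Module.DirectLimit.map (fun n ↦ Ext.postcompOfLinear e R (powQuotient a n) h) fun m n hmn ↦ by
    ext x
    exact Ext.comp_assoc _ _ _ (zero_add i) h (by lia)

lemma postcomp_of (e : Ext X Y j) (h : i + j = k) (n : ℕ) (x : Ext (powQuotient a n) X i) :
    postcomp e h (of n x) = of n (x.comp e h) := by
  rw [postcomp, Module.DirectLimit.map_apply_of, LinearMap.flip_apply,
    Ext.bilinearCompOfLinear_apply_apply]

-- Direct limits along `ℕ` are exact.
lemma exact_postcomp {i' j' : ℕ} (e : Ext X Y j) (h : i + j = i') (e' : Ext Y Z j')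
    (h' : i' + j' = k) (hcomp : e.comp e' rfl = 0)
    (hexact : ∀ n, ∀ y : Ext (powQuotient a n) Y i', y.comp e' h' = 0 →
      ∃ x : Ext (powQuotient a n) X i, x.comp e h = y) :
    Function.Exact (postcomp (a := a) e h) (postcomp e' h') := by
  intro y
  constructor
  · intro hy
    obtain ⟨n, y, rfl⟩ := Module.DirectLimit.exists_of y
    rw [postcomp_of] at hy
    obtain ⟨m, hnm, hm⟩ := Module.DirectLimit.of.zero_exact hy
    have hvanish : (extTransition a i' Y n m hnm y).comp e' h' = 0 := by
      rw [extTransition_apply, Ext.comp_assoc _ _ _ (zero_add i') h' (by lia)]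
      exact hm
    obtain ⟨x, hx⟩ := hexact m _ hvanish
    refine ⟨of m x, ?_⟩
    rw [postcomp_of, hx, Module.DirectLimit.of_f]
  · rintro ⟨x, rfl⟩
    obtain ⟨n, x, rfl⟩ := Module.DirectLimit.exists_of x
    rw [postcomp_of, postcomp_of, Ext.comp_assoc _ _ _ h rfl (by lia), hcomp, Ext.comp_zero,
      map_zero]

variable (a) {S : ShortComplex (ModuleCat.{u} R)} (hS : S.ShortExact)

include hS in
lemma exact_f_g (i : ℕ) : Function.Exact (postcomp (a := a) (Ext.mk₀ S.f) (add_zero i))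
    (postcomp (Ext.mk₀ S.g) (add_zero i)) :=
  exact_postcomp _ _ _ _ (by simp) fun _ ↦ Ext.covariant_sequence_exact₂ _ hS

lemma exact_g_extClass (h : i + 1 = k) :
    Function.Exact (postcomp (a := a) (Ext.mk₀ S.g) (add_zero i)) (postcomp hS.extClass h) :=
  exact_postcomp _ _ _ _ hS.comp_extClass fun _ _ ↦ Ext.covariant_sequence_exact₃ _ hS _ h

lemma exact_extClass_f (h : i + 1 = k) :
    Function.Exact (postcomp (a := a) hS.extClass h) (postcomp (Ext.mk₀ S.f) (add_zero k)) :=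
  exact_postcomp _ _ _ _ hS.extClass_comp fun _ _ hx ↦ Ext.covariant_sequence_exact₁ _ hS _ hx h

lemma subsingleton_of_injective [Injective X] (hi : 0 < i) :
    Subsingleton (LocalCohomology a i X) := by
  refine subsingleton_of_forall_eq 0 fun x ↦ ?_
  obtain ⟨n, x, rfl⟩ := Module.DirectLimit.exists_of x
  obtain ⟨j, rfl⟩ := Nat.exists_eq_add_one.2 hi
  rw [x.eq_zero_of_injective, map_zero]

/-- The linear map `Ext⁰(R/aⁿ, X) → X` sending the class of `f : R/aⁿ ⟶ X` to `f 1`. -/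
noncomputable def extEvalOne (X : ModuleCat.{u} R) (n : ℕ) : Ext (powQuotient a n) X 0 →ₗ[R] X :=
  LinearMap.applyₗ (1 : R ⧸ a ^ n) ∘ₗ ModuleCat.homLinearEquiv.toLinearMap ∘ₗ
    (Ext.linearEquiv₀ (R := R)).toLinearMap

lemma extEvalOne_mk₀ {n : ℕ} (f : powQuotient a n ⟶ X) :
    extEvalOne a X n (Ext.mk₀ f) = f.hom (1 : R ⧸ a ^ n) :=
  congrArg (fun g : powQuotient a n ⟶ X ↦ g.hom (1 : R ⧸ a ^ n))
    ((Ext.linearEquiv₀ (R := R)).apply_symm_apply f)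

lemma extEvalOne_injective (X : ModuleCat.{u} R) (n : ℕ) :
    Function.Injective (extEvalOne a X n) := by
  rw [injective_iff_map_eq_zero]
  intro x hx
  obtain ⟨f, rfl⟩ := (Ext.mk₀_bijective _ _).surjective x
  rw [extEvalOne_mk₀] at hx
  have hf : f = 0 := by
    ext
    exact hx
  rw [hf, Ext.mk₀_zero]

/-- The inclusion of `H⁰_a(X)` into `X`, sending the class of `f : R/aⁿ ⟶ X` to `f 1`. -/
noncomputable def evalOne (X : ModuleCat.{u} R) : LocalCohomology a 0 X →ₗ[R] X :=
  Module.DirectLimit.lift R ℕ _ _ (extEvalOne a X) fun m n h x ↦ by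
    obtain ⟨f, rfl⟩ := (Ext.mk₀_bijective _ _).surjective x
    rw [extTransition_apply, Ext.mk₀_comp_mk₀, extEvalOne_mk₀, extEvalOne_mk₀]
    rfl

lemma evalOne_of (n : ℕ) (x : Ext (powQuotient a n) X 0) :
    evalOne a X (of n x) = extEvalOne a X n x :=
  Module.DirectLimit.lift_of _ _ _

lemma evalOne_injective (X : ModuleCat.{u} R) : Function.Injective (evalOne a X) :=
  Module.DirectLimit.lift_injective _ _ (extEvalOne_injective a X)

lemma evalOne_postcomp_mk₀ (f : X ⟶ Y) (x : LocalCohomology a 0 X) :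
    evalOne a Y (postcomp (Ext.mk₀ f) (add_zero 0) x) = f.hom (evalOne a X x) := by
  obtain ⟨n, x, rfl⟩ := Module.DirectLimit.exists_of x
  obtain ⟨g, rfl⟩ := (Ext.mk₀_bijective _ _).surjective x
  rw [postcomp_of, evalOne_of, evalOne_of, Ext.mk₀_comp_mk₀, extEvalOne_mk₀, extEvalOne_mk₀]
  rfl

end LocalCohomology

end Definition

section Torsion

variable {R : Type u} [CommRing R] (a : Ideal R)

/-- The submodule `Γ_a(X)` of elements killed by a power of `a`. -/
def powTorsion (X : Type*) [AddCommGroup X] [Module R X] : Submodule R X where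
  carrier := {x | ∃ n : ℕ, ∀ r ∈ a ^ n, r • x = 0}
  zero_mem' := ⟨0, fun r _ ↦ smul_zero r⟩
  add_mem' := by
    rintro x y ⟨m, hm⟩ ⟨n, hn⟩
    refine ⟨m ⊔ n, fun r hr ↦ ?_⟩
    rw [smul_add, hm r (Ideal.pow_le_pow_right le_sup_left hr),
      hn r (Ideal.pow_le_pow_right le_sup_right hr), add_zero]
  smul_mem' := by
    rintro c x ⟨n, hn⟩
    exact ⟨n, fun r hr ↦ by rw [smul_comm, hn r hr, smul_zero]⟩

variable {a} {X Y : Type*} [AddCommGroup X] [Module R X] [AddCommGroup Y] [Module R Y]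

lemma mem_powTorsion {x : X} : x ∈ powTorsion a X ↔ ∃ n : ℕ, ∀ r ∈ a ^ n, r • x = 0 := Iff.rfl

lemma apply_mem_powTorsion (f : X →ₗ[R] Y) {x : X} (hx : x ∈ powTorsion a X) :
    f x ∈ powTorsion a Y := by
  obtain ⟨n, hn⟩ := hx
  exact ⟨n, fun r hr ↦ by rw [← map_smul, hn r hr, map_zero]⟩

lemma apply_mem_powTorsion_iff {f : X →ₗ[R] Y} (hf : Function.Injective f) {x : X} :
    f x ∈ powTorsion a Y ↔ x ∈ powTorsion a X := by
  simp only [mem_powTorsion, ← map_smul, map_eq_zero_iff f hf]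

lemma powTorsion_eq_top_of_surjective {f : X →ₗ[R] Y} (hf : Function.Surjective f)
    (hX : powTorsion a X = ⊤) : powTorsion a Y = ⊤ := by
  refine eq_top_iff.2 fun y _ ↦ ?_
  obtain ⟨x, rfl⟩ := hf y
  exact apply_mem_powTorsion f (hX ▸ Submodule.mem_top)

lemma powTorsion_powTorsion (a : Ideal R) (X : Type*) [AddCommGroup X] [Module R X] :
    powTorsion a (powTorsion a X) = ⊤ :=
  eq_top_iff.2 fun x _ ↦ (apply_mem_powTorsion_iff (powTorsion a X).injective_subtype).1 x.2

lemma powTorsion_quotient_eq_top (a : Ideal R) : powTorsion a (R ⧸ a) = ⊤ := by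
  refine eq_top_iff.2 fun x _ ↦ ⟨1, fun r hr ↦ ?_⟩
  rw [pow_one] at hr
  rw [Algebra.smul_def, Ideal.Quotient.algebraMap_eq, Ideal.Quotient.eq_zero_iff_mem.2 hr,
    zero_mul]

lemma exists_powQuotient_hom {X : ModuleCat.{u} R} {x : X} {n : ℕ} (hx : ∀ r ∈ a ^ n, r • x = 0) :
    ∃ f : powQuotient a n ⟶ X, f.hom (1 : R ⧸ a ^ n) = x :=
  ⟨ModuleCat.ofHom ((a ^ n).liftQ (LinearMap.toSpanSingleton R X x) hx), one_smul R x⟩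

lemma range_evalOne (X : ModuleCat.{u} R) :
    LinearMap.range (LocalCohomology.evalOne a X) = powTorsion a X := by
  ext x
  constructor
  · rintro ⟨x, rfl⟩
    obtain ⟨n, x, rfl⟩ := Module.DirectLimit.exists_of x
    obtain ⟨f, rfl⟩ := (Ext.mk₀_bijective _ _).surjective x
    rw [LocalCohomology.evalOne_of, LocalCohomology.extEvalOne_mk₀]
    refine apply_mem_powTorsion f.hom ⟨n, fun r hr ↦ ?_⟩
    rw [← Algebra.algebraMap_eq_smul_one]
    exact Ideal.Quotient.eq_zero_iff_mem.2 hr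
  · rintro ⟨n, hn⟩
    obtain ⟨f, hf⟩ := exists_powQuotient_hom hn
    exact ⟨LocalCohomology.of n (Ext.mk₀ f), by
      rw [LocalCohomology.evalOne_of, LocalCohomology.extEvalOne_mk₀, hf]⟩

/-- `H⁰_a(X)` is the `a`-power torsion submodule of `X`. -/
noncomputable def localCohomologyZeroEquiv (X : ModuleCat.{u} R) :
    LocalCohomology a 0 X ≃ₗ[R] powTorsion a X :=
  (LinearEquiv.ofInjective _ (LocalCohomology.evalOne_injective a X)).trans
    (LinearEquiv.ofEq _ _ (range_evalOne X))

end Torsion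

lemma surjective_of_exact {X Y Z : Type*} [Zero Z] [Subsingleton Z] {f : X → Y} {g : Y → Z}
    (h : Function.Exact f g) : Function.Surjective f :=
  fun y ↦ (h y).1 (Subsingleton.elim _ _)

lemma injective_of_exact {R X Y Z : Type*} [Ring R] [AddCommGroup X] [Module R X]
    [AddCommGroup Y] [Module R Y] [AddCommGroup Z] [Module R Z] [Subsingleton X]
    {f : X →ₗ[R] Y} {g : Y →ₗ[R] Z} (h : Function.Exact f g) : Function.Injective g := by
  refine (injective_iff_map_eq_zero g).2 fun y hy ↦ ?_
  obtain ⟨x, rfl⟩ := (h y).1 hy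
  rw [Subsingleton.elim x 0, map_zero]

section ArtinRees

variable {R : Type u} [CommRing R] {a : Ideal R}

lemma LocalCohomology.powTorsion_eq_top (i : ℕ) (X : ModuleCat.{u} R) :
    powTorsion a (LocalCohomology a i X) = ⊤ := by
  refine eq_top_iff.2 fun x _ ↦ ?_
  obtain ⟨n, x, rfl⟩ := Module.DirectLimit.exists_of x
  refine apply_mem_powTorsion (of n) ⟨n, fun r hr ↦ ?_⟩
  have hzero : r • 𝟙 (powQuotient a n) = 0 := by
    ext
    change r • (1 : R ⧸ a ^ n) = 0
    rw [← Algebra.algebraMap_eq_smul_one]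
    exact Ideal.Quotient.eq_zero_iff_mem.2 hr
  rw [← x.mk₀_id_comp, ← Ext.smul_comp, ← Ext.mk₀_smul, hzero, Ext.mk₀_zero, Ext.zero_comp]

section Unbundled

variable {X Y : Type*} [AddCommGroup X] [Module R X] [AddCommGroup Y] [Module R Y]

lemma exists_pow_smul_apply_eq_zero [Module.Finite R X] (hY : powTorsion a Y = ⊤)
    (f : X →ₗ[R] Y) : ∃ n : ℕ, ∀ r ∈ a ^ n, ∀ x, r • f x = 0 := by
  obtain ⟨s, hs⟩ : (⊤ : Submodule R X).FG := Module.Finite.fg_top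
  choose k hk using fun y : Y ↦ mem_powTorsion.1 (hY ▸ Submodule.mem_top : y ∈ powTorsion a Y)
  refine ⟨s.sup fun x ↦ k (f x), fun r hr x ↦ ?_⟩
  have hker : Submodule.span R (s : Set X) ≤ LinearMap.ker (r • f) :=
    Submodule.span_le.2 fun y hy ↦ hk (f y) r <|
      Ideal.pow_le_pow_right (Finset.le_sup (f := fun x ↦ k (f x)) hy) hr
  exact hker (hs ▸ Submodule.mem_top)

lemma powTorsion_quotient_powTorsion [IsNoetherianRing R] :
    powTorsion a (X ⧸ powTorsion a X) = ⊥ := by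
  refine eq_bot_iff.2 fun y hy ↦ ?_
  obtain ⟨x, rfl⟩ := Submodule.mkQ_surjective _ y
  obtain ⟨m, hm⟩ := mem_powTorsion.1 hy
  have hmem (r : ↥(a ^ m)) : (r : R) • x ∈ powTorsion a X :=
    (Submodule.Quotient.mk_eq_zero _).1 (hm r r.2)
  let f : ↥(a ^ m) →ₗ[R] powTorsion a X :=
    ((LinearMap.toSpanSingleton R X x).domRestrict (a ^ m)).codRestrict _ hmem
  obtain ⟨n, hn⟩ := exists_pow_smul_apply_eq_zero (powTorsion_powTorsion a X) f
  refine (Submodule.Quotient.mk_eq_zero _).2 ⟨n + m, fun r hr ↦ ?_⟩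
  rw [pow_add] at hr
  induction hr using Submodule.mul_induction_on' with
  | mem_mul_mem s hs t ht =>
    rw [mul_smul]
    exact congrArg Subtype.val (hn s hs ⟨t, ht⟩)
  | add s _ t _ hs ht => rw [add_smul, hs, ht, add_zero]

lemma exists_pow_inf_le_pow_smul [IsNoetherianRing R] (a J : Ideal R) (n : ℕ) :
    ∃ m, a ^ m ⊓ J ≤ a ^ n • J := by
  obtain ⟨k, hk⟩ := Ideal.exists_pow_inf_eq_pow_smul a J
  refine ⟨n + k, ?_⟩
  have heq := hk (n + k) (Nat.le_add_left k n)
  rw [smul_eq_mul, Ideal.mul_top, Nat.add_sub_cancel] at heq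
  rw [heq]
  exact Submodule.smul_mono le_rfl inf_le_right

end Unbundled

lemma exists_extension_of_vanishing {X I : Type u} [AddCommGroup X] [Module R X]
    [AddCommGroup I] [Module R I] [Module.Injective R I] (J K : Submodule R X) (g : J →ₗ[R] I)
    (hg : ∀ y : J, (y : X) ∈ K → g y = 0) :
    ∃ f : X →ₗ[R] I, (∀ y : J, f y = g y) ∧ ∀ x ∈ K, f x = 0 := by
  let ι : J ⧸ K.comap J.subtype →ₗ[R] X ⧸ K := Submodule.mapQ _ _ J.subtype le_rfl
  have hι : Function.Injective ι := by
    rw [← LinearMap.ker_eq_bot]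
    exact Submodule.ker_liftQ_eq_bot' _ _ (by rw [LinearMap.ker_comp, Submodule.ker_mkQ])
  obtain ⟨f, hf⟩ := Module.Injective.extension_property R _ _ _ ι hι (Submodule.liftQ _ g hg)
  refine ⟨f ∘ₗ K.mkQ, fun y ↦ LinearMap.congr_fun hf (Submodule.Quotient.mk y), fun x hx ↦ ?_⟩
  rw [LinearMap.comp_apply, Submodule.mkQ_apply, (Submodule.Quotient.mk_eq_zero K).2 hx, map_zero]

-- A map from an ideal `J` into `Γ_a(I)` is killed by some `aⁿ`, so by Artin–Rees it vanishes on
-- `aᵐ ∩ J` for large `m` and extends to `R/aᵐ → I`, whose image is `a`-power torsion.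
instance injective_powTorsion [IsNoetherianRing R] (a : Ideal R) (I : Type u) [AddCommGroup I]
    [Module R I] [Module.Injective R I] : Module.Injective R (powTorsion a I) := by
  refine Module.Baer.injective fun J g ↦ ?_
  obtain ⟨n, hn⟩ := exists_pow_smul_apply_eq_zero (powTorsion_powTorsion a I) g
  obtain ⟨m, hm⟩ := exists_pow_inf_le_pow_smul a J n
  have hJ : a ^ n • J ≤ (LinearMap.ker g).map J.subtype :=
    Submodule.smul_le.2 fun r hr y hy ↦
      ⟨r • ⟨y, hy⟩, by rw [SetLike.mem_coe, LinearMap.mem_ker, map_smul, hn r hr], rfl⟩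
  have hvanish (y : J) (hy : (y : R) ∈ a ^ m) : ((powTorsion a I).subtype ∘ₗ g) y = 0 := by
    obtain ⟨z, hz, hzy⟩ := hJ (hm ⟨hy, y.2⟩)
    obtain rfl : z = y := Subtype.ext hzy
    rw [LinearMap.comp_apply, hz, map_zero]
  obtain ⟨f, hfg, hf⟩ := exists_extension_of_vanishing J (a ^ m) _ hvanish
  have hmem (x : R) : f x ∈ powTorsion a I :=
    ⟨m, fun r hr ↦ by rw [← map_smul]; exact hf _ (Ideal.mul_mem_right x _ hr)⟩
  exact ⟨f.codRestrict _ hmem, fun x hx ↦ Subtype.ext (hfg ⟨x, hx⟩)⟩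

/-- The short exact sequence `0 → Γ_a(X) → X → X/Γ_a(X) → 0`. -/
abbrev powTorsionSequence (a : Ideal R) (X : Type u) [AddCommGroup X] [Module R X] :
    ShortComplex (ModuleCat.{u} R) :=
  ModuleCat.shortComplexOfCompEqZero (powTorsion a X).subtype (powTorsion a X).mkQ
    (LinearMap.exact_subtype_mkQ _).linearMap_comp_eq_zero

lemma powTorsionSequence_shortExact (a : Ideal R) (X : Type u) [AddCommGroup X] [Module R X] :
    (powTorsionSequence a X).ShortExact :=
  ModuleCat.shortComplex_shortExact _ (LinearMap.exact_subtype_mkQ _)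
    (powTorsion a X).injective_subtype (powTorsion a X).mkQ_surjective

lemma shortExact_cokernel {X Y : ModuleCat.{u} R} (f : X ⟶ Y) [Mono f] :
    (ShortComplex.mk f (cokernel.π f) (cokernel.condition f)).ShortExact where
  exact := ShortComplex.exact_cokernel f

lemma LocalCohomology.evalOne_surjective {X : ModuleCat.{u} R} (hX : powTorsion a X = ⊤) :
    Function.Surjective (evalOne a X) := by
  rw [← LinearMap.range_eq_top, range_evalOne, hX]

variable [IsNoetherianRing R]

lemma injective_quotient_powTorsion (a : Ideal R) (I : ModuleCat.{u} R) [Injective I] :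
    Injective (ModuleCat.of R (I ⧸ powTorsion a I)) := by
  have : Module.Injective R I := Module.injective_module_of_injective_object R I
  have : Injective (powTorsionSequence a I).X₁ :=
    Module.injective_object_of_injective_module R (powTorsion a I)
  let s := (powTorsionSequence_shortExact a I).splittingOfInjective
  exact (⟨s.s, (powTorsionSequence a I).g, s.s_g⟩ : Retract (powTorsionSequence a I).X₃ I).injective

lemma exists_injective_powTorsion_eq_bot {X : ModuleCat.{u} R} (hX : powTorsion a X = ⊥) :
    ∃ (I : ModuleCat.{u} R) (f : X ⟶ I), Mono f ∧ Injective I ∧ powTorsion a I = ⊥ := by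
  obtain ⟨J, _, ι, hι⟩ := EnoughInjectives.presentation X
  rw [ModuleCat.mono_iff_injective] at hι
  refine ⟨.of R (J ⧸ powTorsion a J), ModuleCat.ofHom ((powTorsion a J).mkQ ∘ₗ ι.hom), ?_,
    injective_quotient_powTorsion a J, powTorsion_quotient_powTorsion⟩
  refine (ModuleCat.mono_iff_injective _).2 ((injective_iff_map_eq_zero _).2 fun x hx ↦ ?_)
  have hmem : ι.hom x ∈ powTorsion a J := (Submodule.Quotient.mk_eq_zero _).1 hx
  rwa [apply_mem_powTorsion_iff hι, hX] at hmem

lemma exists_injective_powTorsion_eq_top {X : ModuleCat.{u} R} (hX : powTorsion a X = ⊤) :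
    ∃ (I : ModuleCat.{u} R) (f : X ⟶ I), Mono f ∧ Injective I ∧ powTorsion a I = ⊤ := by
  obtain ⟨J, _, ι, hι⟩ := EnoughInjectives.presentation X
  rw [ModuleCat.mono_iff_injective] at hι
  have : Module.Injective R J := Module.injective_module_of_injective_object R J
  have hmem (x : X) : ι.hom x ∈ powTorsion a J :=
    apply_mem_powTorsion ι.hom (hX ▸ Submodule.mem_top)
  refine ⟨.of R (powTorsion a J), ModuleCat.ofHom (ι.hom.codRestrict _ hmem), ?_,
    Module.injective_object_of_injective_module R _, powTorsion_powTorsion a J⟩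
  exact (ModuleCat.mono_iff_injective _).2 fun x y hxy ↦ hι (congrArg Subtype.val hxy)

namespace LocalCohomology

-- `X` embeds into a torsion injective `I`; the cokernel `C` is again torsion, `Hⁱ⁺¹_a(X)` is a
-- quotient of `Hⁱ_a(C)`, and `H⁰_a(I) → H⁰_a(C)` is `I → C`, which is surjective.
lemma subsingleton_of_powTorsion_eq_top {X : ModuleCat.{u} R} (hX : powTorsion a X = ⊤) {i : ℕ}
    (hi : 0 < i) : Subsingleton (LocalCohomology a i X) := by
  obtain ⟨i, rfl⟩ := Nat.exists_eq_add_one.2 hi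
  induction i using Nat.strong_induction_on generalizing X with | _ i ih
  obtain ⟨I, f, _, _, hI⟩ := exists_injective_powTorsion_eq_top hX
  have hS := shortExact_cokernel f
  have hπ : Function.Surjective (cokernel.π f).hom := hS.moduleCat_surjective_g
  have := subsingleton_of_injective a (X := I) hi
  have hsurj := surjective_of_exact (exact_extClass_f a hS (rfl : i + 1 = _))
  rcases i with _ | i
  · refine subsingleton_of_forall_eq 0 fun x ↦ ?_
    obtain ⟨z, rfl⟩ := hsurj x
    obtain ⟨e, he⟩ := hπ (evalOne a _ z)
    obtain ⟨y, rfl⟩ := evalOne_surjective hI e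
    rw [← evalOne_postcomp_mk₀] at he
    exact (exact_g_extClass a hS rfl z).2 ⟨y, evalOne_injective a _ he⟩
  · have := ih i i.lt_succ_self (powTorsion_eq_top_of_surjective hπ hI) i.succ_pos
    exact hsurj.subsingleton

end LocalCohomology

end ArtinRees

section SerreClass

section Exactness

variable {R : Type u} [Ring R] {P : ObjectProperty (ModuleCat.{u} R)} [P.IsSerreClass]
  {X Y Z : Type u} [AddCommGroup X] [Module R X] [AddCommGroup Y] [Module R Y]
  [AddCommGroup Z] [Module R Z]

lemma prop_of_injective {f : X →ₗ[R] Y} (hf : Function.Injective f) (hY : P (.of R Y)) :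
    P (.of R X) :=
  have : Mono (ModuleCat.ofHom f) := (ModuleCat.mono_iff_injective _).2 hf
  P.prop_of_mono (ModuleCat.ofHom f) hY

lemma prop_of_surjective {f : X →ₗ[R] Y} (hf : Function.Surjective f) (hX : P (.of R X)) :
    P (.of R Y) :=
  have : Epi (ModuleCat.ofHom f) := (ModuleCat.epi_iff_surjective _).2 hf
  P.prop_of_epi (ModuleCat.ofHom f) hX

lemma prop_of_exact {f : X →ₗ[R] Y} {g : Y →ₗ[R] Z} (h : Function.Exact f g)
    (hX : P (.of R X)) (hZ : P (.of R Z)) : P (.of R Y) :=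
  P.prop_X₂_of_exact (S := ModuleCat.shortComplexOfCompEqZero f g h.linearMap_comp_eq_zero)
    ((ShortComplex.ShortExact.moduleCat_exact_iff_function_exact _).2 h) hX hZ

lemma prop_pi (hX : P (.of R X)) (n : ℕ) : P (.of R (Fin n → X)) := by
  induction n with
  | zero => exact P.prop_of_isZero (ModuleCat.isZero_of_subsingleton _)
  | succ n ih =>
    refine prop_of_exact (f := LinearMap.single R (fun _ : Fin (n + 1) ↦ X) 0)
      (g := LinearMap.funLeft R X Fin.succ) (fun x ↦ ⟨fun hx ↦ ⟨x 0, ?_⟩, ?_⟩) hX ih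
    · ext i
      cases i using Fin.cases with
      | zero => exact Pi.single_eq_same (M := fun _ ↦ X) 0 _
      | succ i =>
        exact (Pi.single_eq_of_ne (M := fun _ ↦ X) i.succ_ne_zero (x 0)).trans (congrFun hx i).symm
    · rintro ⟨y, rfl⟩
      ext i
      exact Pi.single_eq_of_ne (M := fun _ ↦ X) i.succ_ne_zero y

end Exactness

variable {R : Type u} [CommRing R] {P : ObjectProperty (ModuleCat.{u} R)} [P.IsSerreClass]

lemma prop_linearMap {N X : Type u} [AddCommGroup N] [Module R N] [Module.Finite R N]
    [AddCommGroup X] [Module R X] (hX : P (.of R X)) : P (.of R (N →ₗ[R] X)) := by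
  obtain ⟨n, f, hf⟩ := Module.Finite.exists_fin' R N
  have hinj : Function.Injective (LinearMap.lcomp R X f) := fun _ _ h ↦
    (LinearMap.cancel_right hf).1 h
  exact prop_of_injective hinj
    (prop_of_injective (LinearEquiv.piRing R X (Fin n) R).injective (prop_pi hX n))

/-- Degree zero `Ext` as a module of linear maps. -/
noncomputable def extZeroEquiv (N X : ModuleCat.{u} R) : Ext N X 0 ≃ₗ[R] (N →ₗ[R] X) :=
  Ext.linearEquiv₀.trans ModuleCat.homLinearEquiv

lemma prop_ext [IsNoetherianRing R] {X : ModuleCat.{u} R} (hX : P X) (N : ModuleCat.{u} R)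
    [Module.Finite R N] (i : ℕ) : P (.of R (Ext N X i)) := by
  induction i generalizing N with
  | zero => exact prop_of_injective (extZeroEquiv N X).injective (prop_linearMap hX)
  | succ n ih =>
    obtain ⟨N, _, _, _, _, f, hf⟩ := Module.exists_finite_presentation R N
    have hS := LinearMap.shortExact_shortComplexKer hf
    have : Module.Finite R f.shortComplexKer.X₁ := by dsimp; infer_instance
    exact prop_of_surjective (f := hS.extClass.precompOfLinear R X (add_comm 1 n))
      (precomp_extClass_surjective_of_projective_X₂ X hS n) (ih f.shortComplexKer.X₁)

end SerreClass

section Shift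

variable {R : Type u} [CommRing R] {a : Ideal R}

namespace LocalCohomology

lemma bijective_postcomp_mk₀_g {S : ShortComplex (ModuleCat.{u} R)} (hS : S.ShortExact) {i j : ℕ}
    (h : i + 1 = j) [Subsingleton (LocalCohomology a i S.X₁)]
    [Subsingleton (LocalCohomology a j S.X₁)] :
    Function.Bijective (postcomp (a := a) (Ext.mk₀ S.g) (add_zero i)) :=
  ⟨injective_of_exact (exact_f_g a hS i), surjective_of_exact (exact_g_extClass a hS h)⟩

lemma bijective_postcomp_extClass {S : ShortComplex (ModuleCat.{u} R)} (hS : S.ShortExact)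
    {i j : ℕ} (h : i + 1 = j) [Subsingleton (LocalCohomology a i S.X₂)]
    [Subsingleton (LocalCohomology a j S.X₂)] :
    Function.Bijective (postcomp (a := a) hS.extClass h) :=
  ⟨injective_of_exact (exact_g_extClass a hS h), surjective_of_exact (exact_extClass_f a hS h)⟩

lemma subsingleton_of_injective_of_powTorsion_eq_bot {I : ModuleCat.{u} R} [Injective I]
    (hI : powTorsion a I = ⊥) (i : ℕ) : Subsingleton (LocalCohomology a i I) := by
  rcases i.eq_zero_or_pos with rfl | hi
  · have : Subsingleton (powTorsion a I) := (Submodule.subsingleton_iff_eq_bot).2 hI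
    exact (localCohomologyZeroEquiv I).injective.subsingleton
  · exact subsingleton_of_injective a hi

/-- `Hⁱ⁺¹_a(X)` does not change when `X` is divided by its `a`-power torsion. -/
noncomputable def quotientPowTorsionEquiv [IsNoetherianRing R] (X : ModuleCat.{u} R) (i : ℕ) :
    LocalCohomology a (i + 1) X ≃ₗ[R] LocalCohomology a (i + 1) (.of R (X ⧸ powTorsion a X)) :=
  have h {j : ℕ} (hj : 0 < j) : Subsingleton (LocalCohomology a j (powTorsionSequence a X).X₁) :=
    subsingleton_of_powTorsion_eq_top (powTorsion_powTorsion a X) hj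
  have := h i.succ_pos
  have := h (i + 1).succ_pos
  .ofBijective _ (bijective_postcomp_mk₀_g (powTorsionSequence_shortExact a X) rfl)

end LocalCohomology

lemma subsingleton_linearMap_of_powTorsion {N X : Type*} [AddCommGroup N] [Module R N]
    [AddCommGroup X] [Module R X] (hN : powTorsion a N = ⊤) (hX : powTorsion a X = ⊥) :
    Subsingleton (N →ₗ[R] X) := by
  refine subsingleton_of_forall_eq 0 fun f ↦ LinearMap.ext fun x ↦ ?_
  rw [LinearMap.zero_apply, ← Submodule.mem_bot R, ← hX]
  exact apply_mem_powTorsion f (hN ▸ Submodule.mem_top)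

lemma subsingleton_ext_of_powTorsion {N I : ModuleCat.{u} R} [Injective I]
    (hN : powTorsion a N = ⊤) (hI : powTorsion a I = ⊥) (i : ℕ) : Subsingleton (Ext N I i) := by
  cases i with
  | zero =>
    have := subsingleton_linearMap_of_powTorsion hN hI
    exact (extZeroEquiv N I).injective.subsingleton
  | succ i => exact subsingleton_of_forall_eq 0 fun x ↦ x.eq_zero_of_injective

open LocalCohomology

-- Embed `X` into an injective module `I` with `Γ_a(I) = 0` and let `C` be the cokernel: neither
-- local cohomology nor the functors `Ext(N, -)` with `N` torsion see `I`.
lemma exists_dimensionShift [IsNoetherianRing R] {X : ModuleCat.{u} R} (hX : powTorsion a X = ⊥) :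
    ∃ C : ModuleCat.{u} R,
      (∀ i, Nonempty (LocalCohomology a i C ≃ₗ[R] LocalCohomology a (i + 1) X)) ∧
      ∀ (N : ModuleCat.{u} R) (i : ℕ), powTorsion a N = ⊤ →
        ∃ f : Ext N C i →ₗ[R] Ext N X (i + 1), Function.Injective f := by
  obtain ⟨I, f, _, _, hI⟩ := exists_injective_powTorsion_eq_bot hX
  have hS := shortExact_cokernel f
  refine ⟨cokernel f, fun i ↦ ?_, fun N i hN ↦ ⟨hS.extClass.postcompOfLinear R N rfl, ?_⟩⟩
  · have := subsingleton_of_injective_of_powTorsion_eq_bot hI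
    exact ⟨.ofBijective _ (bijective_postcomp_extClass hS rfl)⟩
  · refine (injective_iff_map_eq_zero _).2 fun x hx ↦ ?_
    obtain ⟨y, rfl⟩ := Ext.covariant_sequence_exact₃ N hS x rfl hx
    have := subsingleton_ext_of_powTorsion hN hI i
    rw [Subsingleton.elim y 0, Ext.zero_comp]

variable {P : ObjectProperty (ModuleCat.{u} R)} [P.IsSerreClass]

lemma prop_ext_X₃ {S : ShortComplex (ModuleCat.{u} R)} (hS : S.ShortExact) {N : ModuleCat.{u} R}
    {i : ℕ} (h₁ : P (.of R (Ext N S.X₁ (i + 1)))) (h₂ : P (.of R (Ext N S.X₂ i))) :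
    P (.of R (Ext N S.X₃ i)) := by
  refine prop_of_exact (f := (Ext.mk₀ S.g).postcompOfLinear R N (add_zero i))
    (g := hS.extClass.postcompOfLinear R N rfl) (fun x ↦ ⟨fun hx ↦ ?_, ?_⟩) h₂ h₁
  · exact Ext.covariant_sequence_exact₃ N hS x rfl hx
  · rintro ⟨y, rfl⟩
    change (y.comp (Ext.mk₀ S.g) (add_zero i)).comp hS.extClass rfl = 0
    rw [Ext.comp_assoc _ _ _ (add_zero i) (zero_add 1) (by lia), hS.comp_extClass, Ext.comp_zero]

theorem prop_linearMap_localCohomology [IsNoetherianRing R] {N : ModuleCat.{u} R}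
    [Module.Finite R N] (hN : powTorsion a N = ⊤) (X : ModuleCat.{u} R) (t : ℕ)
    (hext : P (.of R (Ext N X t)))
    (hX : ∀ i < t, P (.of R (LocalCohomology a i X))) :
    P (.of R (N →ₗ[R] LocalCohomology a t X)) := by
  induction t generalizing X with
  | zero =>
    have hinj : Function.Injective ((evalOne a X).compRight R (M := N)) := fun _ _ h ↦
      (LinearMap.cancel_left (evalOne_injective a X)).1 h
    exact prop_of_injective hinj (prop_of_injective (extZeroEquiv N X).symm.injective hext)
  | succ t ih =>
    have hΓ : P (.of R (powTorsion a X)) :=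
      prop_of_injective (localCohomologyZeroEquiv X).symm.injective (hX 0 t.succ_pos)
    have hT := powTorsionSequence_shortExact a X
    obtain ⟨C, hC, hCext⟩ := exists_dimensionShift
      (X := .of R (X ⧸ powTorsion a X)) powTorsion_quotient_powTorsion
    have hshift (i : ℕ) : Nonempty (LocalCohomology a i C ≃ₗ[R] LocalCohomology a (i + 1) X) :=
      (hC i).map (·.trans (quotientPowTorsionEquiv X i).symm)
    obtain ⟨δ, hδ⟩ := hCext N t hN
    obtain ⟨e⟩ := hshift t
    refine prop_of_injective (e.congrRight (M := N)).symm.injective (ih C ?_ fun i hi ↦ ?_)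
    · exact prop_of_injective hδ (prop_ext_X₃ hT (prop_ext hΓ N _) hext)
    · obtain ⟨e⟩ := hshift i
      exact prop_of_injective e.injective (hX (i + 1) (Nat.succ_lt_succ hi))

end Shift

section FiniteByFiniteSupport

variable {R : Type u} [CommRing R]

/-- The class of modules with a finitely generated submodule whose quotient has finite support. -/
def finiteByFiniteSupport (R : Type u) [CommRing R] : ObjectProperty (ModuleCat.{u} R) :=
  fun X ↦ ∃ N : Submodule R X, N.FG ∧ (Module.support R (X ⧸ N)).Finite

lemma notMem_support_quotient_iff {X : Type*} [AddCommGroup X] [Module R X] {N : Submodule R X}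
    {p : PrimeSpectrum R} :
    p ∉ Module.support R (X ⧸ N) ↔ ∀ x, ∃ r ∉ p.asIdeal, r • x ∈ N := by
  rw [Module.notMem_support_iff', N.mkQ_surjective.forall]
  simp only [Submodule.mkQ_apply, ← Submodule.Quotient.mk_smul, Submodule.Quotient.mk_eq_zero]

lemma finiteByFiniteSupport_of_finite (X : ModuleCat.{u} R) [Module.Finite R X] :
    finiteByFiniteSupport R X :=
  ⟨⊤, Module.Finite.fg_top, by
    rw [Module.support_eq_empty]
    exact Set.finite_empty⟩

lemma finiteByFiniteSupport_of_finite_support {X : ModuleCat.{u} R}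
    (h : (Module.support R X).Finite) : finiteByFiniteSupport R X :=
  ⟨⊥, Submodule.fg_bot, h.subset
    (Module.support_subset_of_surjective _ (Submodule.mkQ_surjective ⊥))⟩

instance : (finiteByFiniteSupport R).ContainsZero where
  exists_zero :=
    ⟨.of R PUnit, ModuleCat.isZero_of_subsingleton _, finiteByFiniteSupport_of_finite _⟩

instance : (finiteByFiniteSupport R).IsClosedUnderQuotients where
  prop_of_epi {X Y} f hf := by
    rintro ⟨N, hN, hsupp⟩
    rw [ModuleCat.epi_iff_surjective] at hf
    refine ⟨N.map f.hom, hN.map f.hom, hsupp.subset fun p ↦ ?_⟩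
    contrapose
    rw [notMem_support_quotient_iff, notMem_support_quotient_iff, hf.forall]
    intro h x
    obtain ⟨r, hr, hx⟩ := h x
    exact ⟨r, hr, r • x, hx, map_smul f.hom r x⟩

instance [IsNoetherianRing R] : (finiteByFiniteSupport R).IsClosedUnderSubobjects where
  prop_of_mono {X Y} f hf := by
    rintro ⟨N, hN, hsupp⟩
    rw [ModuleCat.mono_iff_injective] at hf
    have : Module.Finite R N := Module.Finite.iff_fg.2 hN
    refine ⟨N.comap f.hom, ?_, hsupp.subset fun p ↦ ?_⟩
    · rw [← Module.Finite.iff_fg]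
      exact Module.Finite.of_injective (f.hom.restrict (p := N.comap f.hom) (q := N) fun _ h ↦ h)
        fun x y h ↦ Subtype.ext (hf (congrArg Subtype.val h))
    · contrapose
      rw [notMem_support_quotient_iff, notMem_support_quotient_iff]
      intro h x
      obtain ⟨r, hr, hx⟩ := h (f.hom x)
      exact ⟨r, hr, by rwa [Submodule.mem_comap, map_smul]⟩

lemma exists_fg_map_eq {X Y : Type*} [AddCommGroup X] [Module R X] [AddCommGroup Y] [Module R Y]
    {f : X →ₗ[R] Y} (hf : Function.Surjective f) {N : Submodule R Y} (hN : N.FG) :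
    ∃ K : Submodule R X, K.FG ∧ K.map f = N := by
  obtain ⟨s, rfl⟩ := hN
  refine ⟨.span R (Function.surjInv hf '' s), Submodule.fg_span (s.finite_toSet.image _), ?_⟩
  simp only [Submodule.map_span, Set.image_image, Function.surjInv_eq, Set.image_id']

lemma support_quotient_map_sup_subset {X Y Z : Type*} [AddCommGroup X] [Module R X]
    [AddCommGroup Y] [Module R Y] [AddCommGroup Z] [Module R Z] {f : X →ₗ[R] Y} {g : Y →ₗ[R] Z}
    (h : Function.Exact f g) (N : Submodule R X) (K : Submodule R Y) :
    Module.support R (Y ⧸ N.map f ⊔ K) ⊆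
      Module.support R (X ⧸ N) ∪ Module.support R (Z ⧸ K.map g) := by
  intro p
  contrapose
  rw [Set.mem_union, not_or, notMem_support_quotient_iff, notMem_support_quotient_iff,
    notMem_support_quotient_iff]
  rintro ⟨hX, hZ⟩ y
  obtain ⟨r, hr, k, hk, hgk⟩ := hZ (g y)
  obtain ⟨x, hx⟩ := (h (r • y - k)).1 (by rw [map_sub, map_smul, hgk, sub_self])
  obtain ⟨s, hs, hsx⟩ := hX x
  refine ⟨s * r, p.2.mul_notMem hs hr, Submodule.mem_sup.2
    ⟨f (s • x), ⟨_, hsx, rfl⟩, s • k, K.smul_mem s hk, ?_⟩⟩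
  rw [map_smul, hx, smul_sub, mul_smul, sub_add_cancel]

instance : (finiteByFiniteSupport R).IsClosedUnderExtensions where
  prop_X₂_of_shortExact {S} hS := by
    rintro ⟨N, hN, hsuppN⟩ ⟨L, hL, hsuppL⟩
    obtain ⟨K, hK, rfl⟩ := exists_fg_map_eq hS.moduleCat_surjective_g hL
    have hexact : Function.Exact S.f.hom S.g.hom :=
      (ShortComplex.ShortExact.moduleCat_exact_iff_function_exact S).1 hS.exact
    exact ⟨N.map S.f.hom ⊔ K, (hN.map _).sup hK,
      (hsuppN.union hsuppL).subset (support_quotient_map_sup_subset hexact N K)⟩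

instance [IsNoetherianRing R] : (finiteByFiniteSupport R).IsSerreClass where

lemma mem_associatedPrimes_iff [IsNoetherianRing R] {X : Type*} [AddCommGroup X] [Module R X]
    {p : Ideal R} : p ∈ associatedPrimes R X ↔ p.IsPrime ∧ ∃ x : X, ∀ r, r ∈ p ↔ r • x = 0 := by
  rw [AssociatedPrimes.mem_iff, isAssociatedPrime_iff]
  simp only [Ideal.ext_iff, Submodule.mem_colon_singleton, Submodule.mem_bot]

lemma associatedPrimes_subset_image_support [IsNoetherianRing R] (X : Type*) [AddCommGroup X]
    [Module R X] : associatedPrimes R X ⊆ PrimeSpectrum.asIdeal '' Module.support R X := by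
  intro p hp
  obtain ⟨hprime, x, hx⟩ := mem_associatedPrimes_iff.1 hp
  exact ⟨⟨p, hprime⟩, Module.mem_support_iff'.2 ⟨x, fun r hr h ↦ hr ((hx r).2 h)⟩, rfl⟩

lemma finite_associatedPrimes_of_finiteByFiniteSupport [IsNoetherianRing R] {X : ModuleCat.{u} R}
    (hX : finiteByFiniteSupport R X) : (associatedPrimes R X).Finite := by
  obtain ⟨N, hN, hsupp⟩ := hX
  have : Module.Finite R N := Module.Finite.iff_fg.2 hN
  have hquot : (associatedPrimes R (X ⧸ N)).Finite :=
    (hsupp.image _).subset (associatedPrimes_subset_image_support _)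
  exact ((associatedPrimes.finite R N).union hquot).subset
    (associatedPrimes.subset_union_of_exact N.injective_subtype (LinearMap.exact_subtype_mkQ N))

-- An associated prime `ann x` of a torsion module contains `a`, so `x` defines a map `R/a → X`.
lemma associatedPrimes_subset_associatedPrimes_linearMap [IsNoetherianRing R] {a : Ideal R}
    {X : Type*} [AddCommGroup X] [Module R X] (hX : powTorsion a X = ⊤) :
    associatedPrimes R X ⊆ associatedPrimes R ((R ⧸ a) →ₗ[R] X) := by
  intro p hp
  obtain ⟨hprime, x, hx⟩ := mem_associatedPrimes_iff.1 hp
  obtain ⟨n, hn⟩ := mem_powTorsion.1 (hX ▸ Submodule.mem_top : x ∈ powTorsion a X)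
  have hap : a ≤ p := hprime.le_of_pow_le fun r hr ↦ (hx r).2 (hn r hr)
  let f : R ⧸ a →ₗ[R] X :=
    Submodule.liftQ a (LinearMap.toSpanSingleton R X x) fun r hr ↦ (hx r).1 (hap hr)
  have hf : f (1 : R ⧸ a) = x := one_smul R x
  refine mem_associatedPrimes_iff.2 ⟨hprime, f, fun r ↦ ?_⟩
  rw [hx r, ← hf, ← LinearMap.smul_apply]
  refine ⟨fun hr ↦ Submodule.linearMap_qext a (LinearMap.ext_ring hr), fun hr ↦ ?_⟩
  rw [hr, LinearMap.zero_apply]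

end FiniteByFiniteSupport

section ExtComparison

universe v w w'

variable {R : Type u} [CommRing R] {C : Type v} [Category.{w} C] [Abelian C] [Linear R C]
  {X X' Y : C}

variable (R) in
/-- The cochain complex `Hom(P, Y)` of a projective resolution `P`. -/
noncomputable abbrev homComplex (P : ProjectiveResolution X) (Y : C) :
    CochainComplex (ModuleCat.{w} R) ℕ :=
  P.complex.linearYonedaObj R Y

variable (R) in
/-- The cochain map `Hom(P, Y) ⟶ Hom(P', Y)` given by precomposition with `P' ⟶ P`. -/
noncomputable def homComplexMap {P : ProjectiveResolution X} {P' : ProjectiveResolution X'}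
    (φ : P'.complex ⟶ P.complex) (Y : C) : homComplex R P Y ⟶ homComplex R P' Y :=
  (HomologicalComplex.unopFunctor _ _).map
    ((((linearYoneda R C).obj Y).rightOp.mapHomologicalComplex _).map φ).op

lemma isoExt_hom_naturality [EnoughProjectives C] {P : ProjectiveResolution X}
    {P' : ProjectiveResolution X'} {f : X' ⟶ X} (φ : ProjectiveResolution.Hom P' P f) (Y : C)
    (n : ℕ) :
    ((_root_.Ext R C n).map f.op).app Y ≫ (P'.isoExt n Y).hom =
      (P.isoExt n Y).hom ≫ HomologicalComplex.homologyMap (homComplexMap R φ.hom Y) n := by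
  have hderived := ProjectiveResolution.isoLeftDerivedObj_inv_naturality f P' P φ.hom
    (by simpa using φ.hom_f_zero_comp_π_f_zero) ((linearYoneda R C).obj Y).rightOp n
  have hop : CommSq ((homComplex R P' Y).homologyOp n).hom _ _
      ((homComplex R P Y).homologyOp n).hom :=
    ⟨(HomologicalComplex.homologyOp_hom_naturality (homComplexMap R φ.hom Y) n).symm⟩
  exact congrArg Quiver.Hom.unop (hop.horiz_inv.horiz_comp ⟨hderived⟩).w

variable (R) in
/-- An `n`-cocycle of `Hom(P, Y)`, as a morphism `Pₙ ⟶ Y`. -/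
noncomputable def cocycleHom (P : ProjectiveResolution X) (Y : C) (n : ℕ) :
    (homComplex R P Y).cycles n →ₗ[R] (P.complex.X n ⟶ Y) :=
  ((homComplex R P Y).iCycles n).hom

variable {P : ProjectiveResolution X} {n : ℕ}

lemma d_comp_cocycleHom (m : ℕ) (z : (homComplex R P Y).cycles n) :
    P.complex.d m n ≫ cocycleHom R P Y n z = 0 :=
  congrArg (fun f ↦ f.hom z) ((homComplex R P Y).iCycles_d n m)

lemma cocycleHom_injective : Function.Injective (cocycleHom R P Y n) :=
  (ModuleCat.mono_iff_injective ((homComplex R P Y).iCycles n)).1 inferInstance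

lemma cocycleHom_cyclesMap {P' : ProjectiveResolution X'} (φ : P'.complex ⟶ P.complex)
    (z : (homComplex R P Y).cycles n) :
    cocycleHom R P' Y n ((HomologicalComplex.cyclesMap (homComplexMap R φ Y) n).hom z) =
      φ.f n ≫ cocycleHom R P Y n z :=
  congrArg (fun f ↦ f.hom z) (HomologicalComplex.cyclesMap_i (homComplexMap R φ Y) n)

lemma exists_cocycleHom_eq {f : P.complex.X n ⟶ Y} (hf : P.complex.d (n + 1) n ≫ f = 0) :
    ∃ z, cocycleHom R P Y n z = f := by
  have hexact : (ShortComplex.mk _ _ ((homComplex R P Y).iCycles_d n (n + 1))).Exact :=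
    ShortComplex.exact_of_f_is_kernel _
      ((homComplex R P Y).cyclesIsKernel n (n + 1) (CochainComplex.next ℕ n))
  exact (ShortComplex.moduleCat_exact_iff _).1 hexact f hf

lemma homologyπ_eq_zero_iff (z : (homComplex R P Y).cycles n) :
    ((homComplex R P Y).homologyπ n).hom z = 0 ↔
      ∃ g : P.complex.X ((ComplexShape.up ℕ).prev n) ⟶ Y,
        P.complex.d n _ ≫ g = cocycleHom R P Y n z := by
  let K := homComplex R P Y
  have hexact : (ShortComplex.mk _ _ (K.toCycles_comp_homologyπ _ n)).Exact :=
    ShortComplex.exact_of_g_is_cokernel _ (K.homologyIsCokernel _ n rfl)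
  refine ((ShortComplex.ShortExact.moduleCat_exact_iff_function_exact _).1 hexact z).trans
    (exists_congr fun g ↦ ?_)
  have hg : cocycleHom R P Y n ((K.toCycles _ n).hom g) = P.complex.d n _ ≫ g :=
    congrArg (fun f ↦ f.hom g) (K.toCycles_i _ n)
  exact (cocycleHom_injective.eq_iff.symm.trans (by rw [← hg]))

lemma homologyπ_surjective : Function.Surjective ((homComplex R P Y).homologyπ n).hom :=
  (ModuleCat.epi_iff_surjective _).1 inferInstance

variable [HasExt.{w'} C]

lemma extMk_degree_zero_eq_zero_iff {f : P.complex.X 0 ⟶ Y} (hf : P.complex.d 1 0 ≫ f = 0) :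
    P.extMk f 1 rfl hf = 0 ↔ f = 0 := by
  refine ⟨fun h ↦ ?_, fun h ↦ by simp only [h, P.extMk_zero]⟩
  rw [← P.extEquivCohomologyClass.apply_eq_iff_eq, P.extEquivCohomologyClass_extMk,
    P.extEquivCohomologyClass_zero,
    CochainComplex.HomComplex.CohomologyClass.mk_eq_zero_iff,
    CochainComplex.HomComplex.Cocycle.toSingleMk_mem_coboundaries_iff _ _ _ _ _ 1 (by simp)] at h
  obtain ⟨g, hg⟩ := h
  have hzero : IsZero (P.cochainComplex.X 1) :=
    P.cochainComplex.isZero_of_isStrictlyLE 0 1 Int.zero_lt_one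
  rw [hzero.eq_of_src g 0, comp_zero] at hg
  rw [← cancel_epi (P.cochainComplexXIso (-((0 : ℕ) : ℤ)) 0 rfl).hom, ← hg, comp_zero]

lemma extMk_eq_zero_iff_exists_prev {f : P.complex.X n ⟶ Y}
    (hf : P.complex.d (n + 1) n ≫ f = 0) :
    P.extMk f (n + 1) rfl hf = 0 ↔
      ∃ g : P.complex.X ((ComplexShape.up ℕ).prev n) ⟶ Y, P.complex.d n _ ≫ g = f := by
  cases n with
  | zero =>
    rw [extMk_degree_zero_eq_zero_iff hf, P.complex.shape 0 _ (by simp)]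
    simp only [zero_comp, exists_const, eq_comm]
  | succ n =>
    rw [CochainComplex.prev_nat_succ]
    exact P.extMk_eq_zero_iff f _ rfl hf n rfl

variable (R) in
/-- The class in `Extⁿ(X, Y)`, taken in the derived category, of an `n`-cocycle of `Hom(P, Y)`. -/
noncomputable def extOfCocycle (P : ProjectiveResolution X) (Y : C) (n : ℕ) :
    (homComplex R P Y).cycles n →ₗ[R] Ext X Y n where
  toFun z := P.extMk (cocycleHom R P Y n z) (n + 1) rfl (d_comp_cocycleHom _ z)
  map_add' x y := by
    simp only [map_add, P.add_extMk]
  map_smul' r x := by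
    rw [RingHom.id_apply, Ext.smul_eq_comp_mk₀, P.extMk_comp_mk₀]
    simp only [map_smul, Linear.comp_smul, Category.comp_id]

lemma extOfCocycle_surjective : Function.Surjective (extOfCocycle R P Y n) := by
  intro α
  obtain ⟨f, hf, rfl⟩ := P.extMk_surjective α (n + 1) rfl
  obtain ⟨z, rfl⟩ := exists_cocycleHom_eq (R := R) hf
  exact ⟨z, rfl⟩

lemma extOfCocycle_cyclesMap {P' : ProjectiveResolution X'} {f : X' ⟶ X}
    (φ : ProjectiveResolution.Hom P' P f) (z : (homComplex R P Y).cycles n) :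
    extOfCocycle R P' Y n ((HomologicalComplex.cyclesMap (homComplexMap R φ.hom Y) n).hom z) =
      (Ext.mk₀ f).comp (extOfCocycle R P Y n z) (zero_add n) := by
  refine Eq.trans ?_ (ProjectiveResolution.mk₀_comp_extMk (cocycleHom R P Y n z) (n + 1) rfl
    (d_comp_cocycleHom _ z) φ).symm
  simp only [extOfCocycle, LinearMap.coe_mk, AddHom.coe_mk, cocycleHom_cyclesMap]

lemma ker_homologyπ_eq_ker_extOfCocycle :
    LinearMap.ker ((homComplex R P Y).homologyπ n).hom = LinearMap.ker (extOfCocycle R P Y n) := by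
  ext z
  exact (homologyπ_eq_zero_iff z).trans (extMk_eq_zero_iff_exists_prev (d_comp_cocycleHom _ z)).symm

variable (R) in
/-- The cohomology of `Hom(P, Y)` is `Ext` in the derived category. -/
noncomputable def homologyEquivExt (P : ProjectiveResolution X) (Y : C) (n : ℕ) :
    (homComplex R P Y).homology n ≃ₗ[R] Ext X Y n :=
  (((homComplex R P Y).homologyπ n).hom.quotKerEquivOfSurjective homologyπ_surjective).symm ≪≫ₗ
    Submodule.quotEquivOfEq _ _ ker_homologyπ_eq_ker_extOfCocycle ≪≫ₗ
    (extOfCocycle R P Y n).quotKerEquivOfSurjective extOfCocycle_surjective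

lemma homologyEquivExt_homologyπ (z : (homComplex R P Y).cycles n) :
    homologyEquivExt R P Y n (((homComplex R P Y).homologyπ n).hom z) = extOfCocycle R P Y n z := by
  have hsymm : (((homComplex R P Y).homologyπ n).hom.quotKerEquivOfSurjective
      homologyπ_surjective).symm (((homComplex R P Y).homologyπ n).hom z) =
        Submodule.Quotient.mk z :=
    (LinearEquiv.symm_apply_eq _).2 rfl
  rw [homologyEquivExt, LinearEquiv.trans_apply, LinearEquiv.trans_apply, hsymm]
  rfl

lemma homologyEquivExt_naturality {P' : ProjectiveResolution X'} {f : X' ⟶ X}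
    (φ : ProjectiveResolution.Hom P' P f) (x : (homComplex R P Y).homology n) :
    homologyEquivExt R P' Y n
        ((HomologicalComplex.homologyMap (homComplexMap R φ.hom Y) n).hom x) =
      (Ext.mk₀ f).comp (homologyEquivExt R P Y n x) (zero_add n) := by
  obtain ⟨z, rfl⟩ := homologyπ_surjective x
  have hz : (HomologicalComplex.homologyMap (homComplexMap R φ.hom Y) n).hom
      (((homComplex R P Y).homologyπ n).hom z) = ((homComplex R P' Y).homologyπ n).hom
        ((HomologicalComplex.cyclesMap (homComplexMap R φ.hom Y) n).hom z) :=
    congrArg (fun f ↦ f.hom z)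
      (HomologicalComplex.homologyπ_naturality (homComplexMap R φ.hom Y) n)
  rw [hz, homologyEquivExt_homologyπ, homologyEquivExt_homologyπ, extOfCocycle_cyclesMap]

variable [EnoughProjectives C]

variable (R) in
/-- The comparison between `Ext` as a derived functor and `Ext` in the derived category. -/
noncomputable def extEquiv (X Y : C) (n : ℕ) :
    ((_root_.Ext R C n).obj (.op X)).obj Y ≃ₗ[R] Ext X Y n :=
  ((projectiveResolution X).isoExt n Y).toLinearEquiv ≪≫ₗ
    homologyEquivExt R (projectiveResolution X) Y n

lemma extEquiv_naturality (f : X' ⟶ X)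
    (x : ((_root_.Ext R C n).obj (.op X)).obj Y) :
    extEquiv R X' Y n ((((_root_.Ext R C n).map f.op).app Y).hom x) =
      (Ext.mk₀ f).comp (extEquiv R X Y n x) (zero_add n) := by
  let φ : ProjectiveResolution.Hom (projectiveResolution X') (projectiveResolution X) f :=
    ⟨ProjectiveResolution.lift f _ _, by
      simpa using ProjectiveResolution.lift_commutes_zero f (projectiveResolution X') _⟩
  have hiso : ((projectiveResolution X').isoExt n Y).hom.hom
      ((((_root_.Ext R C n).map f.op).app Y).hom x) =
        (HomologicalComplex.homologyMap (homComplexMap R φ.hom Y) n).hom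
          (((projectiveResolution X).isoExt n Y).hom.hom x) :=
    congrArg (fun f ↦ f.hom x) (isoExt_hom_naturality φ Y n)
  exact (congrArg _ hiso).trans (homologyEquivExt_naturality φ _)

end ExtComparison

section LocalCohomologyComparison

variable {R : Type u} [CommRing R] (a : Ideal R) (X : ModuleCat.{u} R) (i : ℕ)

/-- The diagram of the modules `Extⁱ(R/aⁿ, X)`, with `Ext` as a derived functor. -/
noncomputable abbrev extDiagram : ℕᵒᵖᵒᵖ ⥤ ModuleCat.{u} R :=
  localCohomology.diagram (localCohomology.idealPowersDiagram a) i ⋙ (evaluation _ _).obj X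

instance : HasColimit (localCohomology.diagram (localCohomology.idealPowersDiagram a) i) :=
  localCohomology.hasColimitDiagram.{u, 0} _ i

instance : PreservesFilteredColimitsOfSize.{0, 0} (forget (ModuleCat.{u} R)) :=
  preservesFilteredColimitsOfSize_shrink.{0, u, 0, u} _

/-- The cocone on `extDiagram a X i` with point `Hⁱ_a(X)`. -/
noncomputable def extDiagramCocone : Cocone (extDiagram a X i) :=
  ((evaluation _ _).obj X).mapCocone (colimit.cocone _)

/-- `Hⁱ_a(X)` is the colimit of `extDiagram a X i`. -/
noncomputable def isColimitExtDiagramCocone : IsColimit (extDiagramCocone a X i) :=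
  isColimitOfPreserves ((evaluation _ _).obj X) (colimit.isColimit _)

/-- The objects of `extDiagram a X i`, with `Ext` taken in the derived category. -/
noncomputable def extDiagramEquiv (n : ℕ) :
    (extDiagram a X i).obj (.op (.op n)) ≃ₗ[R] Ext (powQuotient a n) X i :=
  extEquiv R (powQuotient a n) X i

lemma extDiagramEquiv_map {m n : ℕ} (h : m ≤ n) (x : (extDiagram a X i).obj (.op (.op m))) :
    extDiagramEquiv a X i n (((extDiagram a X i).map (homOfLE h).op.op).hom x) =
      extTransition a i X m n h (extDiagramEquiv a X i m x) :=
  extEquiv_naturality (powQuotientMap a h) x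

/-- The canonical map `Extⁱ(R/aⁿ, X) → Hⁱ_a(X)`. -/
noncomputable def extToLocalCohomology (n : ℕ) :
    Ext (powQuotient a n) X i →ₗ[R] (localCohomology a i).obj X :=
  ((extDiagramCocone a X i).ι.app (.op (.op n))).hom ∘ₗ (extDiagramEquiv a X i n).symm.toLinearMap

variable {a X i}

lemma extToLocalCohomology_extDiagramEquiv (n : ℕ) (x : (extDiagram a X i).obj (.op (.op n))) :
    extToLocalCohomology a X i n (extDiagramEquiv a X i n x) =
      ((extDiagramCocone a X i).ι.app (.op (.op n))).hom x :=
  congrArg ((extDiagramCocone a X i).ι.app (.op (.op n))).hom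
    ((extDiagramEquiv a X i n).symm_apply_apply x)

lemma extToLocalCohomology_extTransition {m n : ℕ} (h : m ≤ n) (x : Ext (powQuotient a m) X i) :
    extToLocalCohomology a X i n (extTransition a i X m n h x) =
      extToLocalCohomology a X i m x := by
  obtain ⟨x, rfl⟩ := (extDiagramEquiv a X i m).surjective x
  rw [← extDiagramEquiv_map, extToLocalCohomology_extDiagramEquiv,
    extToLocalCohomology_extDiagramEquiv]
  exact congrArg (fun f ↦ f.hom x) ((extDiagramCocone a X i).w (homOfLE h).op.op)

lemma exists_extToLocalCohomology_eq (y : (localCohomology a i).obj X) :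
    ∃ n x, extToLocalCohomology a X i n x = y := by
  obtain ⟨j, x, rfl⟩ :=
    Concrete.isColimit_exists_rep _ (isColimitExtDiagramCocone a X i) y
  exact ⟨j.unop.unop, _, extToLocalCohomology_extDiagramEquiv _ x⟩

lemma exists_extTransition_eq_zero {n : ℕ} {x : Ext (powQuotient a n) X i}
    (hx : extToLocalCohomology a X i n x = 0) : ∃ m h, extTransition a i X n m h x = 0 := by
  obtain ⟨x, rfl⟩ := (extDiagramEquiv a X i n).surjective x
  rw [extToLocalCohomology_extDiagramEquiv] at hx
  obtain ⟨k, f, g, hfg⟩ := Concrete.isColimit_exists_of_rep_eq _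
    (isColimitExtDiagramCocone a X i) (j := .op (.op n)) x 0 (hx.trans (map_zero _).symm)
  refine ⟨k.unop.unop, leOfHom f.unop.unop, ?_⟩
  rw [← extDiagramEquiv_map, LinearEquiv.map_eq_zero_iff]
  exact hfg.trans (map_zero ((extDiagram a X i).map g).hom)

variable (a X i) in
/-- The direct limit `LocalCohomology a i X` is Mathlib's local cohomology module. -/
noncomputable def localCohomologyEquiv :
    LocalCohomology a i X ≃ₗ[R] (localCohomology a i).obj X := by
  refine LinearEquiv.ofBijective
    (Module.DirectLimit.lift R ℕ _ _ (extToLocalCohomology a X i) fun _ _ h x ↦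
      extToLocalCohomology_extTransition h x) ⟨?_, fun y ↦ ?_⟩
  · rw [injective_iff_map_eq_zero]
    intro x hx
    obtain ⟨n, x, rfl⟩ := Module.DirectLimit.exists_of x
    rw [Module.DirectLimit.lift_of] at hx
    obtain ⟨m, h, hm⟩ := exists_extTransition_eq_zero hx
    rw [← Module.DirectLimit.of_f (hij := h), hm, map_zero]
  · obtain ⟨n, x, rfl⟩ := exists_extToLocalCohomology_eq y
    exact ⟨LocalCohomology.of n x, Module.DirectLimit.lift_of _ _ _⟩

end LocalCohomologyComparison

lemma associatedPrimes_localCohomology_subset {R : Type u} [CommRing R] [IsNoetherianRing R]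
    (a : Ideal R) (X : ModuleCat.{u} R) (i : ℕ) :
    associatedPrimes R ((localCohomology a i).obj X) ⊆
      associatedPrimes R ((R ⧸ a) →ₗ[R] LocalCohomology a i X) :=
  LinearEquiv.AssociatedPrimes.eq (localCohomologyEquiv a X i) ▸
    associatedPrimes_subset_associatedPrimes_linearMap (LocalCohomology.powTorsion_eq_top i X)

end SerreLocalCohomology

open SerreLocalCohomology in
theorem associatedPrimes_localCohomology_finite_general {R : Type u} [CommRing R]
    [IsNoetherianRing R] (a : Ideal R) {M : Type u} [AddCommGroup M] [Module R M] (t : ℕ)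
    (hext : finiteByFiniteSupport R
      (ModuleCat.of R (CategoryTheory.Abelian.Ext (ModuleCat.of R (R ⧸ a)) (ModuleCat.of R M) t)))
    (h : ∀ i < t, finiteByFiniteSupport R ((localCohomology a i).obj (ModuleCat.of R M))) :
    (associatedPrimes R ((localCohomology a t).obj (ModuleCat.of R M))).Finite := by
  have hlower : ∀ i < t,
      finiteByFiniteSupport R (.of R (LocalCohomology a i (ModuleCat.of R M))) := fun i hi ↦
    prop_of_injective (localCohomologyEquiv a _ i).injective (h i hi)
  have hhom : finiteByFiniteSupport R
      (.of R ((R ⧸ a) →ₗ[R] LocalCohomology a t (ModuleCat.of R M))) :=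
    prop_linearMap_localCohomology (powTorsion_quotient_eq_top a) _ t hext hlower
  exact (finite_associatedPrimes_of_finiteByFiniteSupport hhom).subset
    (associatedPrimes_localCohomology_subset a _ t)

/-- If `M` is a finitely generated module over a Noetherian ring `R`, `a` an ideal of `R`,
and `t` a nonnegative integer such that for each `i < t` the local cohomology module
`H^i_a(M)` is either finitely generated or has finite support, then `Ass (H^t_a(M))`
is a finite set. -/
theorem associatedPrimes_localCohomology_finite {R : Type u} [CommRing R] [IsNoetherianRing R]
    (a : Ideal R) {M : Type u} [AddCommGroup M] [Module R M] [Module.Finite R M] (t : ℕ)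
    (h : ∀ i < t, Module.Finite R ((localCohomology a i).obj (ModuleCat.of R M)) ∨
      (Module.support R ((localCohomology a i).obj (ModuleCat.of R M))).Finite) :
    (associatedPrimes R ((localCohomology a t).obj (ModuleCat.of R M))).Finite :=
  associatedPrimes_localCohomology_finite_general a t
    (SerreLocalCohomology.finiteByFiniteSupport_of_finite _)
    fun i hi ↦ (h i hi).elim (fun _ ↦ SerreLocalCohomology.finiteByFiniteSupport_of_finite _)
      SerreLocalCohomology.finiteByFiniteSupport_of_finite_support
end
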